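/- arXiv:1601.03467 — 4 statements merged into one kernel-verified Lean document; each statement's English description precedes it below -/
import Mathlib

section
/- The function s ↦ A(s)/s^2 extends to a smooth function on R, and there exist positive constants c_1, c_2 such that c_1 ≤ A(s)/s^2 ≤ c_2 for all s ∈ (0,4]. -/
noncomputable def gammaN (n : ℕ) : ℝ :=
  (∫ u in (0:ℝ)..1, (1 - u ^ 2) ^ (((n : ℝ) - 1) / 2))⁻¹

noncomputable def Afun (n : ℕ) (s : ℝ) : ℝ :=
  2 * gammaN n *
    ∫ u in (0:ℝ)..1, (1 - u ^ 2) ^ (((n : ℝ) - 1) / 2) * (Real.sin (u * s / 2)) ^ 2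

theorem hasDerivAt_param (w f f' : ℝ → ℝ) (hw : Continuous w)
    (hf : ∀ x, HasDerivAt f (f' x) x) (hf' : Continuous f') (x₀ : ℝ) :
    HasDerivAt (fun s => ∫ u in (0:ℝ)..1, w u * f (u * s))
      (∫ u in (0:ℝ)..1, (w u * u) * f' (u * x₀)) x₀ := by
  have hfc : Continuous f := continuous_iff_continuousAt.2 fun x => (hf x).continuousAt
  have hK : IsCompact (Metric.closedBall x₀ 1 ×ˢ Set.Icc (0:ℝ) 1) :=
    (isCompact_closedBall x₀ 1).prod isCompact_Icc
  obtain ⟨C, hC⟩ := hK.exists_bound_of_continuousOn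
    (f := fun p : ℝ × ℝ => (w p.2 * p.2) * f' (p.2 * p.1)) (by fun_prop)
  refine (intervalIntegral.hasDerivAt_integral_of_dominated_loc_of_deriv_le
    (F := fun s u => w u * f (u * s)) (F' := fun s u => (w u * u) * f' (u * s))
    (bound := fun _ => C)
    (Metric.closedBall_mem_nhds x₀ one_pos) ?_ ?_ ?_ ?_ ?_ ?_).2
  · exact Filter.Eventually.of_forall fun s =>
      (by fun_prop : Continuous fun u => w u * f (u * s)).aestronglyMeasurable
  · exact (by fun_prop : Continuous fun u => w u * f (u * x₀)).intervalIntegrable _ _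
  · exact (by fun_prop : Continuous fun u => (w u * u) * f' (u * x₀)).aestronglyMeasurable
  · refine Filter.Eventually.of_forall fun t ht x hx => ?_
    rw [Set.uIoc_of_le zero_le_one] at ht
    exact hC (x, t) ⟨hx, ht.1.le, ht.2⟩
  · exact intervalIntegrable_const
  · refine Filter.Eventually.of_forall fun t _ x _ => ?_
    have h1 : HasDerivAt (fun x : ℝ => t * x) t x := by
      simpa using (hasDerivAt_id x).const_mul t
    have := ((hf (t * x)).comp x h1).const_mul (w t)
    exact this.congr_deriv (by ring)

theorem contDiff_param_nat (k : ℕ) : ∀ (w f : ℝ → ℝ), Continuous w →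
    ContDiff ℝ (⊤ : ℕ∞) f →
    ContDiff ℝ k (fun s => ∫ u in (0:ℝ)..1, w u * f (u * s)) := by
  induction k with
  | zero =>
    intro w f hw hf
    have := hf.continuous
    rw [Nat.cast_zero, contDiff_zero]
    exact intervalIntegral.continuous_parametric_intervalIntegral_of_continuous' (by fun_prop) _ _
  | succ k ih =>
    intro w f hw hf
    have hf2 := contDiff_infty_iff_deriv.1 hf
    have hd := hasDerivAt_param w f (deriv f) hw (fun x => (hf2.1 x).hasDerivAt) hf2.2.continuous
    push_cast
    rw [contDiff_succ_iff_deriv]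
    refine ⟨fun x => (hd x).differentiableAt, by simp, ?_⟩
    rw [show deriv _ = _ from funext fun x => (hd x).deriv]
    exact ih (fun u => w u * u) (deriv f) (by fun_prop) hf2.2

theorem contDiff_param (w f : ℝ → ℝ) (hw : Continuous w) (hf : ContDiff ℝ (⊤ : ℕ∞) f) :
    ContDiff ℝ (⊤ : ℕ∞) (fun s => ∫ u in (0:ℝ)..1, w u * f (u * s)) :=
  contDiff_infty.2 fun k => contDiff_param_nat k w f hw hf

theorem contDiff_sinc' : ContDiff ℝ (⊤ : ℕ∞) Real.sinc := by
  have h := contDiff_param (fun _ => 1) Real.cos continuous_const Real.contDiff_cos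
  convert h using 1
  ext x
  by_cases hx : x = 0
  · simp [hx]
  · rw [Real.sinc_of_ne_zero hx]
    simp [intervalIntegral.integral_comp_mul_right _ hx]
    field_simp

theorem sinc_mul' (x : ℝ) : Real.sinc x * x = Real.sin x := by
  by_cases hx : x = 0
  · simp [hx]
  · rw [Real.sinc_of_ne_zero hx]; field_simp

theorem Afun_div_sq_smooth_and_bounded (n : ℕ) (hn : 1 ≤ n) :
    (∃ B : ℝ → ℝ, ContDiff ℝ (⊤ : ℕ∞) B ∧ ∀ s : ℝ, s ≠ 0 → B s = Afun n s / s ^ 2) ∧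
      ∃ c₁ c₂ : ℝ, 0 < c₁ ∧ 0 < c₂ ∧
        ∀ s ∈ Set.Ioc (0 : ℝ) 4, c₁ ≤ Afun n s / s ^ 2 ∧ Afun n s / s ^ 2 ≤ c₂ := by
  have hp : 0 ≤ ((n : ℝ) - 1) / 2 := by
    have : (1:ℝ) ≤ n := by exact_mod_cast hn
    linarith
  set p := ((n : ℝ) - 1) / 2 with hpdef
  have hw : Continuous fun u : ℝ => (1 - u ^ 2) ^ p :=
    Continuous.rpow_const (by fun_prop) fun _ => Or.inr hp
  have hwpos : ∀ u ∈ Set.Ioo (0:ℝ) 1, 0 < (1 - u ^ 2) ^ p := fun u hu =>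
    Real.rpow_pos_of_pos (by nlinarith [hu.1, hu.2]) _
  have hγ : 0 < gammaN n :=
    inv_pos.2 (intervalIntegral.intervalIntegral_pos_of_pos_on (hw.intervalIntegrable _ _)
      hwpos one_pos)
  have hgs : ContDiff ℝ (⊤ : ℕ∞) fun x : ℝ => Real.sinc (x / 2) ^ 2 :=
    (contDiff_sinc'.comp (contDiff_id.div_const 2)).pow 2
  have hgc := hgs.continuous
  have hwc : Continuous fun u : ℝ => (1 - u ^ 2) ^ p * (u ^ 2 / 4) := hw.mul (by fun_prop)
  set B : ℝ → ℝ := fun s => 2 * gammaN n *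
    ∫ u in (0:ℝ)..1, ((1 - u ^ 2) ^ p * (u ^ 2 / 4)) *
      (fun x : ℝ => Real.sinc (x / 2) ^ 2) (u * s) with hB
  have hBs : ContDiff ℝ (⊤ : ℕ∞) B := contDiff_const.mul (contDiff_param _ _ hwc hgs)
  have hBA : ∀ s : ℝ, s ≠ 0 → B s = Afun n s / s ^ 2 := by
    intro s hs
    rw [eq_div_iff (pow_ne_zero 2 hs)]
    simp only [hB, Afun]
    rw [mul_assoc, ← intervalIntegral.integral_mul_const]
    congr 1
    refine intervalIntegral.integral_congr fun u _ => ?_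
    simp only [← hpdef]
    rw [← sinc_mul']
    ring
  have hBpos : ∀ s ∈ Set.Icc (0:ℝ) 4, 0 < B s := by
    intro s hs
    refine mul_pos (by positivity) (intervalIntegral.intervalIntegral_pos_of_pos_on ?_ ?_ one_pos)
    · exact (hwc.mul (hgc.comp (by fun_prop : Continuous fun u : ℝ => u * s))).intervalIntegrable _ _
    · intro u hu
      have h1 := hwpos u hu
      have h2 : 0 < u ^ 2 / 4 := by have := hu.1; positivity
      have h3 : Real.sinc (u * s / 2) ≠ 0 := by
        by_cases h0 : u * s / 2 = 0
        · simp [h0]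
        · rw [Real.sinc_of_ne_zero h0]
          have h4 : 0 ≤ u * s / 2 := by have := hu.1; have := hs.1; positivity
          have h5 : u * s / 2 < Real.pi := by
            nlinarith [Real.pi_gt_three, hu.1, hu.2, hs.1, hs.2]
          exact div_ne_zero (Real.sin_pos_of_pos_of_lt_pi (lt_of_le_of_ne h4 (Ne.symm h0)) h5).ne' h0
      positivity
  refine ⟨⟨B, hBs, hBA⟩, ?_⟩
  have hne : (Set.Icc (0:ℝ) 4).Nonempty := ⟨0, by norm_num⟩
  obtain ⟨a, ha, hamin⟩ := isCompact_Icc.exists_isMinOn hne hBs.continuous.continuousOn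
  obtain ⟨b, hb, hbmax⟩ := isCompact_Icc.exists_isMaxOn hne hBs.continuous.continuousOn
  refine ⟨B a, B b, hBpos a ha, hBpos b hb, fun s hs => ?_⟩
  rw [← hBA s hs.1.ne']
  exact ⟨hamin ⟨hs.1.le, hs.2⟩, hbmax ⟨hs.1.le, hs.2⟩⟩
end

section
/- Let p, q ∈ (1,∞) with p ≥ q, and λ ∈ (1,∞). Then there exists a constant C such that ‖G_λ^*(F)‖_{L^p(R^n)} ≤ C ‖G(F)‖_{L^p(R^n)} for all nonnegative measurable functions F on R^n × (0,∞), where G(F)(x) := (∫_0^1 |F(x,t)|^q dt/t)^{1/q} and G_λ^*(F)(x) := (∫_0^1 ∫_{R^n} |F(y,t)|^q (t/(t+|x-y|))^{λn} dy dt/t^{n+1})^{1/q}. -/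
open MeasureTheory Metric
open scoped ENNReal

/-- The Littlewood–Paley type `g`-functional `G(F)(x) = (∫_0^1 F(x,t)^q dt/t)^{1/q}`. -/
noncomputable def GFn (n : ℕ) (q : ℝ)
    (F : EuclideanSpace ℝ (Fin n) → ℝ → ℝ≥0∞) (x : EuclideanSpace ℝ (Fin n)) : ℝ≥0∞ :=
  (∫⁻ t in Set.Ioo (0:ℝ) 1, F x t ^ q * ENNReal.ofReal t⁻¹) ^ (1 / q)

/-- The `g_λ^*` functional. -/
noncomputable def GlambdaFn (n : ℕ) (q lam : ℝ)
    (F : EuclideanSpace ℝ (Fin n) → ℝ → ℝ≥0∞) (x : EuclideanSpace ℝ (Fin n)) : ℝ≥0∞ :=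
  (∫⁻ t in Set.Ioo (0:ℝ) 1,
      (∫⁻ y, F y t ^ q * ENNReal.ofReal ((t / (t + dist x y)) ^ (lam * n)) ∂volume) *
        ENNReal.ofReal (t ^ (-(n : ℝ) - 1))) ^ (1 / q)

/-- The `L^p` "norm" `(∫ h^p)^{1/p}` of an `ℝ≥0∞`-valued function. -/
noncomputable def Np (n : ℕ) (p : ℝ) (h : EuclideanSpace ℝ (Fin n) → ℝ≥0∞) : ℝ≥0∞ :=
  (∫⁻ x, h x ^ p ∂volume) ^ (1 / p)


/-- Uncentered Hardy–Littlewood maximal function. -/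
noncomputable def MF (n : ℕ) (h : EuclideanSpace ℝ (Fin n) → ℝ≥0∞)
    (x : EuclideanSpace ℝ (Fin n)) : ℝ≥0∞ :=
  ⨆ (c : EuclideanSpace ℝ (Fin n)) (r : ℝ) (_ : x ∈ ball c r),
    (volume (ball c r))⁻¹ * ∫⁻ y in ball c r, h y

lemma lt_MF_iff {n : ℕ} {h : EuclideanSpace ℝ (Fin n) → ℝ≥0∞} {a : ℝ≥0∞}
    {x : EuclideanSpace ℝ (Fin n)} : a < MF n h x ↔
      ∃ c r, x ∈ ball c r ∧ a < (volume (ball c r))⁻¹ * ∫⁻ y in ball c r, h y := by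
  simp only [MF, lt_iSup_iff, exists_prop]

lemma isOpen_lt_MF {n : ℕ} (h : EuclideanSpace ℝ (Fin n) → ℝ≥0∞) (a : ℝ≥0∞) :
    IsOpen {x | a < MF n h x} := by
  rw [isOpen_iff_mem_nhds]
  intro x hx
  obtain ⟨c, r, hxr, ha⟩ := lt_MF_iff.1 hx
  filter_upwards [isOpen_ball.mem_nhds hxr] with y hy
  exact lt_MF_iff.2 ⟨c, r, hy, ha⟩

lemma measurable_MF {n : ℕ} (h : EuclideanSpace ℝ (Fin n) → ℝ≥0∞) : Measurable (MF n h) :=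
  measurable_of_Ioi fun a => (isOpen_lt_MF h a).measurableSet

lemma vol_ball_ne_top {n : ℕ} (c : EuclideanSpace ℝ (Fin n)) (r : ℝ) :
    volume (ball c r) ≠ ⊤ := measure_ball_lt_top.ne

lemma vol_ball_ne_zero {n : ℕ} {c x : EuclideanSpace ℝ (Fin n)} {r : ℝ} (hx : x ∈ ball c r) :
    volume (ball c r) ≠ 0 :=
  (measure_ball_pos volume c (pos_of_mem_ball hx)).ne'

lemma int_ball_le_MF {n : ℕ} (h : EuclideanSpace ℝ (Fin n) → ℝ≥0∞)
    {c x : EuclideanSpace ℝ (Fin n)} {r : ℝ} (hx : x ∈ ball c r) :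
    ∫⁻ y in ball c r, h y ≤ volume (ball c r) * MF n h x := by
  have h1 : (volume (ball c r))⁻¹ * ∫⁻ y in ball c r, h y ≤ MF n h x :=
    le_iSup_of_le c (le_iSup_of_le r (le_iSup_of_le hx le_rfl))
  calc _ = volume (ball c r) * ((volume (ball c r))⁻¹ * ∫⁻ y in ball c r, h y) := by
        rw [← mul_assoc, ENNReal.mul_inv_cancel (vol_ball_ne_zero hx) (vol_ball_ne_top c r), one_mul]
    _ ≤ _ := by gcongr

lemma MF_le_of_le {n : ℕ} {h : EuclideanSpace ℝ (Fin n) → ℝ≥0∞} {k : ℝ≥0∞}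
    (hk : ∀ x, h x ≤ k) (x : EuclideanSpace ℝ (Fin n)) : MF n h x ≤ k := by
  refine iSup_le fun c => iSup_le fun r => iSup_le fun hx => ?_
  calc _ ≤ (volume (ball c r))⁻¹ * ∫⁻ y in ball c r, k := by gcongr with y; exact hk y
    _ = ((volume (ball c r))⁻¹ * volume (ball c r)) * k := by
        rw [setLIntegral_const]; ring
    _ = k := by
        rw [ENNReal.inv_mul_cancel (vol_ball_ne_zero hx) (vol_ball_ne_top c r), one_mul]
    _ ≤ k := le_rfl

lemma weak_MF {n : ℕ} (h : EuclideanSpace ℝ (Fin n) → ℝ≥0∞) (a : ℝ≥0∞) :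
    a * volume {x | a < MF n h x} ≤ 5 ^ n * ∫⁻ x, h x := by
  rw [(isOpen_lt_MF h a).measure_eq_iSup_isCompact]
  simp only [ENNReal.mul_iSup]
  refine iSup_le fun K => iSup_le fun hKs => iSup_le fun hK => ?_
  have key : ∀ x : EuclideanSpace ℝ (Fin n), ∃ (c : EuclideanSpace ℝ (Fin n)) (r : ℝ), x ∈ K →
      (x ∈ ball c r ∧ a < (volume (ball c r))⁻¹ * ∫⁻ y in ball c r, h y) := by
    intro x
    by_cases hx : x ∈ K
    · obtain ⟨c, r, h1⟩ := lt_MF_iff.1 (hKs hx)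
      exact ⟨c, r, fun _ => h1⟩
    · exact ⟨0, 0, fun h => absurd h hx⟩
  choose c r hcr using key
  obtain ⟨T, hTK, hT⟩ := hK.elim_nhds_subcover (fun x => ball (c x) (r x))
    (fun x hx => isOpen_ball.mem_nhds (hcr x hx).1)
  obtain ⟨R, hR⟩ := (T.finite_toSet.image r).bddAbove
  obtain ⟨u, huT, hdis, hcov⟩ := Vitali.exists_disjoint_subfamily_covering_enlargement_closedBall
    (T : Set (EuclideanSpace ℝ (Fin n))) c r R (fun x hx => hR ⟨x, hx, rfl⟩) 5 (by norm_num)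
  have hufin : u.Finite := T.finite_toSet.subset huT
  have hKu : K ⊆ ⋃ b ∈ u, closedBall (c b) (5 * r b) := by
    intro x hx
    obtain ⟨y, hy, hxy⟩ := Set.mem_iUnion₂.1 (hT hx)
    obtain ⟨b, hb, hbs⟩ := hcov y hy
    exact Set.mem_iUnion₂.2 ⟨b, hb, hbs (ball_subset_closedBall hxy)⟩
  have hmem : ∀ b ∈ u, b ∈ K := fun b hb => hTK b (huT hb)
  lift u to Finset (EuclideanSpace ℝ (Fin n)) using hufin
  have hvol : ∀ b ∈ u, a * volume (closedBall (c b) (5 * r b)) ≤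
      5 ^ n * ∫⁻ y in ball (c b) (r b), h y := by
    intro b hb
    obtain ⟨h1, h2⟩ := hcr b (hmem b hb)
    have hr : 0 < r b := pos_of_mem_ball h1
    have e1 : volume (closedBall (c b) (5 * r b)) = 5 ^ n * volume (ball (c b) (r b)) := by
      rw [Measure.addHaar_closedBall _ _ (by positivity), Measure.addHaar_ball_of_pos _ _ hr,
        finrank_euclideanSpace_fin, mul_pow, ENNReal.ofReal_mul (by positivity), mul_assoc,
        ENNReal.ofReal_pow (by norm_num)]
      norm_num
    have e2 : a * volume (ball (c b) (r b)) ≤ ∫⁻ y in ball (c b) (r b), h y := by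
      calc _ ≤ ((volume (ball (c b) (r b)))⁻¹ * ∫⁻ y in ball (c b) (r b), h y)
              * volume (ball (c b) (r b)) := by gcongr
        _ = ((volume (ball (c b) (r b)))⁻¹ * volume (ball (c b) (r b))) *
              ∫⁻ y in ball (c b) (r b), h y := by ring
        _ = _ := by
          rw [ENNReal.inv_mul_cancel (vol_ball_ne_zero h1) (vol_ball_ne_top _ _), one_mul]
    calc _ = 5 ^ n * (a * volume (ball (c b) (r b))) := by rw [e1]; ring
      _ ≤ _ := by gcongr
  calc a * volume K ≤ a * ∑ b ∈ u, volume (closedBall (c b) (5 * r b)) := by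
        gcongr
        exact (measure_mono hKu).trans (measure_biUnion_finset_le u _)
    _ = ∑ b ∈ u, a * volume (closedBall (c b) (5 * r b)) := by rw [Finset.mul_sum]
    _ ≤ ∑ b ∈ u, 5 ^ n * ∫⁻ y in ball (c b) (r b), h y := Finset.sum_le_sum hvol
    _ = 5 ^ n * ∑ b ∈ u, ∫⁻ y in ball (c b) (r b), h y := by rw [Finset.mul_sum]
    _ = 5 ^ n * ∫⁻ y in ⋃ b ∈ u, ball (c b) (r b), h y := by
        rw [lintegral_biUnion_finset]
        · intro i hi j hj hij
          exact (hdis hi hj hij).mono ball_subset_closedBall ball_subset_closedBall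
        · exact fun b _ => measurableSet_ball
    _ ≤ _ := by gcongr; exact Measure.restrict_le_self

lemma weak_MF2 {n : ℕ} {h : EuclideanSpace ℝ (Fin n) → ℝ≥0∞} (hm : Measurable h) (a : ℝ≥0∞) :
    a * volume {x | 2 * a < MF n h x} ≤ 5 ^ n * ∫⁻ x in {x | a < h x}, h x := by
  rw [← lintegral_indicator (measurableSet_lt measurable_const hm)]
  refine le_trans ?_ (weak_MF _ a)
  gcongr a * volume ?_
  intro x hx
  obtain ⟨c, r, hxr, ha⟩ := lt_MF_iff.1 hx
  refine lt_MF_iff.2 ⟨c, r, hxr, ?_⟩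
  have h1 : (volume (ball c r))⁻¹ * ∫⁻ y in ball c r, h y ≤
      (volume (ball c r))⁻¹ * (∫⁻ y in ball c r, {x | a < h x}.indicator h y) + a := by
    calc _ ≤ (volume (ball c r))⁻¹ * ∫⁻ y in ball c r, ({x | a < h x}.indicator h y + a) := by
          gcongr with y
          by_cases hy : a < h y
          · rw [Set.indicator_of_mem (by exact hy)]; exact le_self_add
          · exact (not_lt.1 hy).trans le_add_self
      _ = (volume (ball c r))⁻¹ * (∫⁻ y in ball c r, {x | a < h x}.indicator h y) +
          ((volume (ball c r))⁻¹ * volume (ball c r)) * a := by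
          rw [lintegral_add_right _ measurable_const, setLIntegral_const]; ring
      _ = _ := by
        rw [ENNReal.inv_mul_cancel (vol_ball_ne_zero hxr) (vol_ball_ne_top c r), one_mul]
  by_contra hcon
  have h2 := ha.trans_le (h1.trans (add_le_add_left (not_lt.1 hcon) a))
  rw [two_mul] at h2
  exact lt_irrefl _ h2

lemma strong_MF {n : ℕ} {s : ℝ} (hs : 1 < s) {h : EuclideanSpace ℝ (Fin n) → ℝ≥0∞}
    (hm : Measurable h) {k : ℝ≥0∞} (hk : k ≠ ⊤) (hhk : ∀ x, h x ≤ k) :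
    ∫⁻ x, MF n h x ^ s ≤ ENNReal.ofReal (2 ^ s * s * 5 ^ n * (s - 1)⁻¹) * ∫⁻ x, h x ^ s := by
  have hMtop : ∀ x, MF n h x ≠ ⊤ := fun x => ((MF_le_of_le hhk x).trans_lt hk.lt_top).ne
  have htop : ∀ x, h x ≠ ⊤ := fun x => ((hhk x).trans_lt hk.lt_top).ne
  set ν := (volume : Measure (EuclideanSpace ℝ (Fin n))).withDensity h with hν
  have A := lintegral_rpow_eq_lintegral_meas_lt_mul (μ := volume)
    (f := fun x => (MF n h x).toReal / 2) (Filter.Eventually.of_forall fun x => by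
      simp only [Pi.zero_apply]; positivity)
    ((measurable_MF h).ennreal_toReal.div_const 2).aemeasurable (p := s) (by linarith)
  have B := lintegral_rpow_eq_lintegral_meas_lt_mul (μ := ν)
    (f := fun x => (h x).toReal) (Filter.Eventually.of_forall fun x => by
      simp only [Pi.zero_apply]; positivity)
    hm.ennreal_toReal.aemeasurable (p := s - 1) (by linarith)
  have e1 : ∫⁻ x, MF n h x ^ s = ENNReal.ofReal (2 ^ s) *
      ∫⁻ x, ENNReal.ofReal (((MF n h x).toReal / 2) ^ s) := by
    rw [← lintegral_const_mul' _ _ ENNReal.ofReal_ne_top]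
    refine lintegral_congr fun x => ?_
    rw [← ENNReal.ofReal_mul (by positivity), ← Real.mul_rpow (by norm_num) (by positivity),
      mul_div_cancel₀ _ (by norm_num), ← ENNReal.ofReal_rpow_of_nonneg (by positivity) (by linarith),
      ENNReal.ofReal_toReal (hMtop x)]
  have e2 : ∫⁻ x, ENNReal.ofReal ((h x).toReal ^ (s - 1)) ∂ν = ∫⁻ x, h x ^ s := by
    rw [hν, lintegral_withDensity_eq_lintegral_mul _ hm (by fun_prop)]
    refine lintegral_congr fun x => ?_
    simp only [Pi.mul_apply]
    rw [← ENNReal.ofReal_rpow_of_nonneg (by positivity) (by linarith),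
      ENNReal.ofReal_toReal (htop x)]
    nth_rewrite 1 [← ENNReal.rpow_one (h x)]
    rw [← ENNReal.rpow_add_of_nonneg _ _ (by norm_num) (by linarith)]
    congr 1; ring
  have e3 : ∫⁻ t in Set.Ioi (0:ℝ), volume {x | t < (MF n h x).toReal / 2} *
        ENNReal.ofReal (t ^ (s - 1)) ≤
      5 ^ n * ∫⁻ t in Set.Ioi (0:ℝ), ν {x | t < (h x).toReal} *
        ENNReal.ofReal (t ^ (s - 1 - 1)) := by
    rw [← lintegral_const_mul' _ _ (by finiteness)]
    refine setLIntegral_mono' measurableSet_Ioi fun t ht => ?_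
    have ht : 0 < t := ht
    have s1 : {x | t < (MF n h x).toReal / 2} = {x | 2 * ENNReal.ofReal t < MF n h x} := by
      ext x
      simp only [Set.mem_ofPred_eq]
      rw [lt_div_iff₀ (by norm_num), ← ENNReal.ofReal_lt_iff_lt_toReal (by positivity) (hMtop x),
        mul_comm, ENNReal.ofReal_mul (by norm_num)]
      norm_num
    have s2 : {x | t < (h x).toReal} = {x | ENNReal.ofReal t < h x} := by
      ext x
      simp only [Set.mem_ofPred_eq]
      rw [← ENNReal.ofReal_lt_iff_lt_toReal (by positivity) (htop x)]
    have s3 := weak_MF2 hm (ENNReal.ofReal t)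
    rw [s1, s2, hν, withDensity_apply _ (measurableSet_lt measurable_const hm)]
    have s4 : t ^ (s - 1) = t * t ^ (s - 1 - 1) := by
      nth_rewrite 2 [← Real.rpow_one t]
      rw [← Real.rpow_add ht]; congr 1; ring
    rw [s4, ENNReal.ofReal_mul ht.le]
    calc _ = (ENNReal.ofReal t * volume {x | 2 * ENNReal.ofReal t < MF n h x}) *
            ENNReal.ofReal (t ^ (s - 1 - 1)) := by ring
      _ ≤ _ := by rw [← mul_assoc]; gcongr
  have e4 : ∫⁻ t in Set.Ioi (0:ℝ), ν {x | t < (h x).toReal} * ENNReal.ofReal (t ^ (s - 1 - 1)) =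
      ENNReal.ofReal (s - 1)⁻¹ * ∫⁻ x, h x ^ s := by
    rw [← e2, B, ← mul_assoc, ← ENNReal.ofReal_mul (by rw [inv_nonneg]; linarith),
      inv_mul_cancel₀ (by linarith), ENNReal.ofReal_one, one_mul]
  rw [e1, A]
  calc _ ≤ ENNReal.ofReal (2 ^ s) * (ENNReal.ofReal s * (5 ^ n *
        (ENNReal.ofReal (s - 1)⁻¹ * ∫⁻ x, h x ^ s))) := by rw [← e4]; gcongr
    _ = _ := by
      have : (0:ℝ) ≤ (s - 1)⁻¹ := by rw [inv_nonneg]; linarith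
      rw [ENNReal.ofReal_mul (by positivity), ENNReal.ofReal_mul (by positivity),
        ENNReal.ofReal_mul (by positivity), ENNReal.ofReal_pow (by norm_num)]
      norm_num; ring

lemma kernel_pointwise {n : ℕ} {b : ℝ} (hb : 0 < b) {t : ℝ} (ht : 0 < t)
    (x y : EuclideanSpace ℝ (Fin n)) :
    ENNReal.ofReal ((t / (t + dist x y)) ^ b) ≤
      ∑' j : ℕ, ENNReal.ofReal (2 ^ b * ((2:ℝ) ^ (-b)) ^ j) *
        (ball y (2 ^ j * t)).indicator 1 x := by
  have hex : ∃ j : ℕ, dist x y < 2 ^ j * t := by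
    obtain ⟨j, hj⟩ := pow_unbounded_of_one_lt (dist x y / t) (by norm_num : (1:ℝ) < 2)
    exact ⟨j, (div_lt_iff₀ ht).1 hj⟩
  classical
  have hj := Nat.find_spec hex
  have hmin := fun m => Nat.find_min hex (m := m)
  set j := Nat.find hex
  refine le_trans ?_ (ENNReal.le_tsum j)
  rw [Set.indicator_of_mem (by exact hj)]
  simp only [Pi.one_apply, mul_one]
  apply ENNReal.ofReal_le_ofReal
  have hd : 0 ≤ dist x y := dist_nonneg
  have e : (2:ℝ) ^ b * ((2:ℝ) ^ (-b)) ^ j = (2 * (2⁻¹) ^ j) ^ b := by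
    rw [Real.mul_rpow (by norm_num) (by positivity), Real.rpow_neg (by norm_num),
      ← Real.inv_rpow (by norm_num), ← Real.rpow_natCast, ← Real.rpow_natCast,
      ← Real.rpow_mul (by norm_num), ← Real.rpow_mul (by norm_num), mul_comm b]
  rw [e]
  apply Real.rpow_le_rpow (by positivity) _ hb.le
  rw [div_le_iff₀ (by positivity)]
  rcases Nat.eq_zero_or_pos j with h0 | h0
  · rw [h0]; simp; linarith
  · obtain ⟨m, hm⟩ := Nat.exists_eq_add_of_lt h0
    have h1 := not_lt.1 (hmin m (by omega))
    have h2 : (2:ℝ) * 2⁻¹ ^ j = (2 ^ m)⁻¹ := by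
      rw [hm, zero_add, pow_succ, inv_pow]; field_simp
    rw [h2, ← div_eq_inv_mul, le_div_iff₀ (by positivity)]
    linarith

lemma kernel_bound (n : ℕ) {lam : ℝ} (hlam : 1 < lam) :
    ∃ C : ℝ≥0∞, C ≠ ⊤ ∧ ∀ h : EuclideanSpace ℝ (Fin n) → ℝ≥0∞, Measurable h →
      ∀ t : ℝ, 0 < t → ∀ y,
      (∫⁻ x, h x * ENNReal.ofReal ((t / (t + dist x y)) ^ (lam * n))) *
        ENNReal.ofReal (t ^ (-(n:ℝ))) ≤ C * MF n h y := by
  rcases Nat.eq_zero_or_pos n with h0 | h0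
  · subst h0
    refine ⟨volume (ball (0 : EuclideanSpace ℝ (Fin 0)) 1), vol_ball_ne_top _ _, ?_⟩
    intro h hm t ht y
    have hu : ball (0 : EuclideanSpace ℝ (Fin 0)) 1 = Set.univ := by
      ext z; simp [Subsingleton.elim z 0]
    have := int_ball_le_MF h (c := 0) (r := 1) (x := y) (by rw [hu]; trivial)
    simpa [hu] using this
  · set b := lam * n with hb
    have hn : (0:ℝ) < n := by exact_mod_cast h0
    have hb0 : 0 < b := by positivity
    have hbn : (n:ℝ) < b := by rw [hb]; nlinarith
    set V := volume (ball (0 : EuclideanSpace ℝ (Fin n)) 1)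
    set ρ := ENNReal.ofReal ((2:ℝ) ^ ((n:ℝ) - b)) with hρ
    have hρ1 : ρ < 1 := by
      rw [hρ, ← ENNReal.ofReal_one]
      apply (ENNReal.ofReal_lt_ofReal_iff (by norm_num)).2
      exact Real.rpow_lt_one_of_one_lt_of_neg (by norm_num) (by linarith)
    refine ⟨ENNReal.ofReal (2 ^ b) * V * (1 - ρ)⁻¹, ?_, ?_⟩
    · refine ENNReal.mul_ne_top (ENNReal.mul_ne_top ENNReal.ofReal_ne_top (vol_ball_ne_top _ _)) ?_
      rw [ENNReal.inv_ne_top]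
      exact (tsub_pos_of_lt hρ1).ne'
    intro h hm t ht y
    calc _ ≤ (∫⁻ x, ∑' j : ℕ, ENNReal.ofReal (2 ^ b * ((2:ℝ) ^ (-b)) ^ j) *
        (ball y (2 ^ j * t)).indicator h x) * ENNReal.ofReal (t ^ (-(n:ℝ))) := by
          gcongr with x
          calc _ ≤ h x * _ := mul_le_mul' le_rfl (kernel_pointwise hb0 ht x y)
            _ = _ := by
              rw [← ENNReal.tsum_mul_left]
              refine tsum_congr fun j => ?_
              by_cases hx : x ∈ ball y (2 ^ j * t)
              · simp only [Set.indicator_of_mem hx, Pi.one_apply]; ring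
              · simp only [Set.indicator_of_notMem hx, mul_zero]
      _ = (∑' j : ℕ, ENNReal.ofReal (2 ^ b * ((2:ℝ) ^ (-b)) ^ j) *
        ∫⁻ x in ball y (2 ^ j * t), h x) * ENNReal.ofReal (t ^ (-(n:ℝ))) := by
          rw [lintegral_tsum]
          · congr 1
            refine tsum_congr fun j => ?_
            rw [lintegral_const_mul' _ _ ENNReal.ofReal_ne_top, lintegral_indicator measurableSet_ball]
          · exact fun j => ((hm.indicator measurableSet_ball).const_mul _).aemeasurable
      _ ≤ (∑' j : ℕ, ENNReal.ofReal (2 ^ b * ((2:ℝ) ^ (-b)) ^ j) *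
          (volume (ball y (2 ^ j * t)) * MF n h y)) * ENNReal.ofReal (t ^ (-(n:ℝ))) := by
          gcongr with j
          exact int_ball_le_MF h (mem_ball_self (by positivity))
      _ = ∑' j : ℕ, (ENNReal.ofReal (2 ^ b) * V * MF n h y) * ρ ^ j := by
          rw [← ENNReal.tsum_mul_right]
          refine tsum_congr fun j => ?_
          rw [Measure.addHaar_ball_of_pos _ _ (by positivity), finrank_euclideanSpace_fin]
          have e1 : ρ ^ j = ENNReal.ofReal (((2:ℝ) ^ (-b)) ^ j) * ENNReal.ofReal ((2 ^ j * t) ^ n) *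
              ENNReal.ofReal (t ^ (-(n:ℝ))) := by
            rw [hρ, ← ENNReal.ofReal_pow (by positivity), ← ENNReal.ofReal_mul (by positivity),
              ← ENNReal.ofReal_mul (by positivity)]
            congr 1
            rw [Real.rpow_neg ht.le, Real.rpow_natCast, mul_pow, sub_eq_add_neg,
              Real.rpow_add (by norm_num), mul_pow, Real.rpow_natCast, pow_right_comm]
            field_simp
          rw [e1, ENNReal.ofReal_mul (by positivity)]
          ring
      _ = _ := by
          rw [ENNReal.tsum_mul_left, ENNReal.tsum_geometric]; ring

/-- The functional `G^q`. -/
noncomputable def vF (n : ℕ) (q : ℝ)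
    (F : EuclideanSpace ℝ (Fin n) → ℝ → ℝ≥0∞) (x : EuclideanSpace ℝ (Fin n)) : ℝ≥0∞ :=
  ∫⁻ t in Set.Ioo (0:ℝ) 1, F x t ^ q * ENNReal.ofReal t⁻¹

/-- The functional `G_λ^q`. -/
noncomputable def uF (n : ℕ) (q lam : ℝ)
    (F : EuclideanSpace ℝ (Fin n) → ℝ → ℝ≥0∞) (x : EuclideanSpace ℝ (Fin n)) : ℝ≥0∞ :=
  ∫⁻ t in Set.Ioo (0:ℝ) 1,
      (∫⁻ y, F y t ^ q * ENNReal.ofReal ((t / (t + dist x y)) ^ (lam * n)) ∂volume) *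
        ENNReal.ofReal (t ^ (-(n : ℝ) - 1))

lemma measurable_vF {n : ℕ} {q : ℝ} {F : EuclideanSpace ℝ (Fin n) → ℝ → ℝ≥0∞}
    (hF : Measurable (Function.uncurry F)) : Measurable (vF n q F) := by
  refine Measurable.lintegral_prod_right'
    (f := fun z : EuclideanSpace ℝ (Fin n) × ℝ => F z.1 z.2 ^ q * ENNReal.ofReal z.2⁻¹) ?_
  have : Measurable fun z : EuclideanSpace ℝ (Fin n) × ℝ => F z.1 z.2 := hF
  fun_prop

lemma measurable_inner {n : ℕ} {q lam : ℝ} {F : EuclideanSpace ℝ (Fin n) → ℝ → ℝ≥0∞}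
    (hF : Measurable (Function.uncurry F)) :
    Measurable fun z : (EuclideanSpace ℝ (Fin n) × ℝ) × EuclideanSpace ℝ (Fin n) =>
      F z.2 z.1.2 ^ q * ENNReal.ofReal ((z.1.2 / (z.1.2 + dist z.1.1 z.2)) ^ (lam * n)) := by
  have h1 : Measurable fun z : (EuclideanSpace ℝ (Fin n) × ℝ) × EuclideanSpace ℝ (Fin n) =>
      F z.2 z.1.2 := hF.comp (measurable_snd.prodMk (measurable_snd.comp measurable_fst))
  fun_prop

lemma measurable_outer {n : ℕ} {q lam : ℝ} {F : EuclideanSpace ℝ (Fin n) → ℝ → ℝ≥0∞}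
    (hF : Measurable (Function.uncurry F)) :
    Measurable fun z : EuclideanSpace ℝ (Fin n) × ℝ =>
      (∫⁻ y, F y z.2 ^ q * ENNReal.ofReal ((z.2 / (z.2 + dist z.1 y)) ^ (lam * n)) ∂volume) *
        ENNReal.ofReal (z.2 ^ (-(n : ℝ) - 1)) := by
  refine Measurable.mul ?_ (by fun_prop)
  exact Measurable.lintegral_prod_right' (measurable_inner hF)

lemma measurable_uF {n : ℕ} {q lam : ℝ} {F : EuclideanSpace ℝ (Fin n) → ℝ → ℝ≥0∞}
    (hF : Measurable (Function.uncurry F)) : Measurable (uF n q lam F) :=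
  Measurable.lintegral_prod_right' (measurable_outer hF)

lemma key_ineq (n : ℕ) (q : ℝ) {lam : ℝ} (hlam : 1 < lam) :
    ∃ C : ℝ≥0∞, C ≠ ⊤ ∧ ∀ F : EuclideanSpace ℝ (Fin n) → ℝ → ℝ≥0∞,
      Measurable (Function.uncurry F) → ∀ h : EuclideanSpace ℝ (Fin n) → ℝ≥0∞, Measurable h →
      ∫⁻ x, h x * uF n q lam F x ≤ C * ∫⁻ x, vF n q F x * MF n h x := by
  obtain ⟨C, hC, hCb⟩ := kernel_bound n hlam
  refine ⟨C, hC, fun F hF h hm => ?_⟩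
  have hM := measurable_MF h
  have hFt : ∀ t, Measurable fun y => F y t := fun t =>
    hF.comp (measurable_id.prodMk measurable_const)
  have hF2 : Measurable fun z : EuclideanSpace ℝ (Fin n) × ℝ => F z.1 z.2 := hF
  have hFx : ∀ x, Measurable fun t => F x t := fun x =>
    hF.comp (measurable_const.prodMk measurable_id)
  calc _ = ∫⁻ x, ∫⁻ t in Set.Ioo (0:ℝ) 1, h x *
      ((∫⁻ y, F y t ^ q * ENNReal.ofReal ((t / (t + dist x y)) ^ (lam * n)) ∂volume) *
        ENNReal.ofReal (t ^ (-(n : ℝ) - 1))) := by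
        refine lintegral_congr fun x => ?_
        rw [uF, lintegral_const_mul]
        exact (measurable_outer hF).comp (measurable_const.prodMk measurable_id)
    _ = ∫⁻ t in Set.Ioo (0:ℝ) 1, ∫⁻ x, h x *
      ((∫⁻ y, F y t ^ q * ENNReal.ofReal ((t / (t + dist x y)) ^ (lam * n)) ∂volume) *
        ENNReal.ofReal (t ^ (-(n : ℝ) - 1))) := by
        rw [lintegral_lintegral_swap]
        exact ((hm.comp measurable_fst).mul (measurable_outer hF)).aemeasurable
    _ ≤ ∫⁻ t in Set.Ioo (0:ℝ) 1, ∫⁻ y, C * ((F y t ^ q * ENNReal.ofReal t⁻¹) * MF n h y) := by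
        refine setLIntegral_mono' measurableSet_Ioo fun t ht => ?_
        have ht0 : 0 < t := ht.1
        have e0 : ENNReal.ofReal (t ^ (-(n : ℝ) - 1)) =
            ENNReal.ofReal (t ^ (-(n : ℝ))) * ENNReal.ofReal t⁻¹ := by
          rw [← ENNReal.ofReal_mul (by positivity), Real.rpow_sub_one ht0.ne', div_eq_mul_inv]
        calc _ = ∫⁻ x, ∫⁻ y, h x * (F y t ^ q *
              ENNReal.ofReal ((t / (t + dist x y)) ^ (lam * n)) *
              ENNReal.ofReal (t ^ (-(n : ℝ) - 1))) := by
              refine lintegral_congr fun x => ?_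
              have := hFt t
              rw [lintegral_const_mul _ (by fun_prop), lintegral_mul_const _ (by fun_prop)]
          _ = ∫⁻ y, ∫⁻ x, h x * (F y t ^ q *
              ENNReal.ofReal ((t / (t + dist x y)) ^ (lam * n)) *
              ENNReal.ofReal (t ^ (-(n : ℝ) - 1))) := by
              rw [lintegral_lintegral_swap]
              have := (hFt t)
              simp only [Function.uncurry_def]
              fun_prop
          _ = ∫⁻ y, (F y t ^ q * ENNReal.ofReal t⁻¹) *
              ((∫⁻ x, h x * ENNReal.ofReal ((t / (t + dist x y)) ^ (lam * n))) *
                ENNReal.ofReal (t ^ (-(n : ℝ)))) := by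
              refine lintegral_congr fun y => ?_
              rw [← lintegral_mul_const _ (by fun_prop), ← lintegral_const_mul _ (by fun_prop)]
              refine lintegral_congr fun x => ?_
              rw [e0]; ring
          _ ≤ _ := by
              refine lintegral_mono fun y => ?_
              calc _ ≤ (F y t ^ q * ENNReal.ofReal t⁻¹) * (C * MF n h y) :=
                    mul_le_mul' le_rfl (hCb h hm t ht0 y)
                _ = _ := by ring
    _ = ∫⁻ y, ∫⁻ t in Set.Ioo (0:ℝ) 1, C * ((F y t ^ q * ENNReal.ofReal t⁻¹) * MF n h y) := by
        rw [lintegral_lintegral_swap]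
        simp only [Function.uncurry_def]
        have h1 : Measurable fun z : ℝ × EuclideanSpace ℝ (Fin n) => F z.2 z.1 :=
          hF.comp (measurable_snd.prodMk measurable_fst)
        fun_prop
    _ = _ := by
        rw [← lintegral_const_mul' _ _ hC]
        refine lintegral_congr fun y => ?_
        rw [lintegral_const_mul' _ _ hC, vF]
        have := hFx y
        rw [lintegral_mul_const _ (by fun_prop)]

lemma dual_step (n : ℕ) {r : ℝ} (hr : 1 < r) {C : ℝ≥0∞} (hC : C ≠ ⊤) :
    ∃ D : ℝ≥0∞, D ≠ ⊤ ∧ ∀ u v : EuclideanSpace ℝ (Fin n) → ℝ≥0∞, Measurable u → Measurable v →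
      (∀ h : EuclideanSpace ℝ (Fin n) → ℝ≥0∞, Measurable h →
        ∫⁻ x, h x * u x ≤ C * ∫⁻ x, v x * MF n h x) →
      ∫⁻ x, u x ^ r ≤ D * ∫⁻ x, v x ^ r := by
  have hrs : r.HolderConjugate (r / (r - 1)) := Real.HolderConjugate.conjExponent hr
  set s := r / (r - 1) with hs
  have hs1 : 1 < s := hrs.symm.lt
  set S := ENNReal.ofReal (2 ^ s * s * 5 ^ n * (s - 1)⁻¹) with hS
  have hr0 : 0 < r := by linarith
  have hs0 : 0 < s := by linarith
  refine ⟨(C * S ^ (1 / s)) ^ r, ?_, ?_⟩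
  · have : S ≠ ⊤ := ENNReal.ofReal_ne_top
    exact ENNReal.rpow_ne_top_of_nonneg hr0.le (ENNReal.mul_ne_top hC
      (ENNReal.rpow_ne_top_of_nonneg (by positivity) this))
  intro u v hu hv huv
  let h : ℕ → EuclideanSpace ℝ (Fin n) → ℝ≥0∞ := fun k =>
    (ball 0 (k:ℝ)).indicator fun x => (min (u x) k) ^ (r - 1)
  have hhm : ∀ k, Measurable (h k) := fun k =>
    ((hu.min measurable_const).pow_const _).indicator measurableSet_ball
  have hrs1 : (r - 1) * s = r := by rw [hs]; field_simp [(by linarith : r - 1 ≠ 0)]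
  have hpow : ∀ k x, h k x ^ s = (ball 0 (k:ℝ)).indicator (fun x => (min (u x) k) ^ r) x := by
    intro k x
    by_cases hx : x ∈ ball (0 : EuclideanSpace ℝ (Fin n)) (k:ℝ)
    · simp only [h, Set.indicator_of_mem hx]
      rw [← ENNReal.rpow_mul, hrs1]
    · simp only [h, Set.indicator_of_notMem hx]
      exact ENNReal.zero_rpow_of_pos hs0
  have hbound : ∀ k x, h k x ≤ (k : ℝ≥0∞) ^ (r - 1) := by
    intro k x
    refine Set.indicator_le' (g := fun _ => (k : ℝ≥0∞) ^ (r - 1)) (fun x _ => ?_)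
      (fun x _ => by simp) x
    exact ENNReal.rpow_le_rpow (min_le_right _ _) (by linarith)
  have hktop : ∀ k : ℕ, (k : ℝ≥0∞) ^ (r - 1) ≠ ⊤ := fun k =>
    ENNReal.rpow_ne_top_of_nonneg (by linarith) (ENNReal.natCast_ne_top k)
  have hAfin : ∀ k, ∫⁻ x, h k x ^ s ≠ ⊤ := by
    intro k
    simp only [hpow]
    rw [lintegral_indicator measurableSet_ball]
    refine ((lintegral_mono (g := fun _ => (k:ℝ≥0∞) ^ r) fun x =>
      ENNReal.rpow_le_rpow (min_le_right _ _) hr0.le).trans_lt ?_).ne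
    rw [setLIntegral_const]
    exact ENNReal.mul_lt_top (ENNReal.rpow_lt_top_of_nonneg hr0.le (ENNReal.natCast_ne_top k))
      measure_ball_lt_top
  have hA : ∀ k, ∫⁻ x, h k x ^ s ≤ (C * S ^ (1 / s)) ^ r * ∫⁻ x, v x ^ r := by
    intro k
    set A := ∫⁻ x, h k x ^ s with hAdef
    have h1 : A ≤ ∫⁻ x, h k x * u x := by
      refine lintegral_mono fun x => ?_
      simp only []
      rw [hpow]
      by_cases hx : x ∈ ball (0 : EuclideanSpace ℝ (Fin n)) (k:ℝ)
      · simp only [h, Set.indicator_of_mem hx]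
        calc (min (u x) k) ^ r = (min (u x) k) ^ (r - 1) * (min (u x) k) ^ (1:ℝ) := by
              rw [← ENNReal.rpow_add_of_nonneg _ _ (by linarith) (by norm_num)]; congr 1; ring
          _ ≤ _ := by rw [ENNReal.rpow_one]; gcongr; exact min_le_left _ _
      · simp only [Set.indicator_of_notMem hx]; exact zero_le
    have h2 : A ≤ (C * S ^ (1 / s) * (∫⁻ x, v x ^ r) ^ (1 / r)) * A ^ (1 / s) := by
      calc A ≤ C * ∫⁻ x, v x * MF n (h k) x := h1.trans (huv _ (hhm k))
        _ ≤ C * ((∫⁻ x, v x ^ r) ^ (1 / r) * (∫⁻ x, MF n (h k) x ^ s) ^ (1 / s)) := by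
            gcongr
            exact ENNReal.lintegral_mul_le_Lp_mul_Lq volume hrs hv.aemeasurable
              (measurable_MF (h k)).aemeasurable
        _ ≤ C * ((∫⁻ x, v x ^ r) ^ (1 / r) * (S * A) ^ (1 / s)) := by
            gcongr
            exact strong_MF hs1 (hhm k) (hktop k) (hbound k)
        _ = _ := by rw [ENNReal.mul_rpow_of_nonneg _ _ (by positivity)]; ring
    by_cases hA0 : A = 0
    · rw [hA0]; exact zero_le
    have hAs0 : A ^ (1 / s) ≠ 0 := by simp [hA0, hs0.le, hs0]
    have hAst : A ^ (1 / s) ≠ ⊤ := ENNReal.rpow_ne_top_of_nonneg (by positivity) (hAfin k)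
    have h3 : A ^ (1 / r) ≤ C * S ^ (1 / s) * (∫⁻ x, v x ^ r) ^ (1 / r) := by
      have e : A ^ (1 / r) * A ^ (1 / s) = A := by
        rw [← ENNReal.rpow_add_of_nonneg _ _ (by positivity) (by positivity)]
        rw [one_div, one_div, hrs.inv_add_inv_eq_one, ENNReal.rpow_one]
      rw [← ENNReal.mul_le_mul_iff_left hAs0 hAst, e]
      exact h2
    calc A = (A ^ (1 / r)) ^ r := by
          rw [← ENNReal.rpow_mul, one_div_mul_cancel hr0.ne', ENNReal.rpow_one]
      _ ≤ (C * S ^ (1 / s) * (∫⁻ x, v x ^ r) ^ (1 / r)) ^ r := by gcongr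
      _ = _ := by
          rw [ENNReal.mul_rpow_of_nonneg _ _ hr0.le, ← ENNReal.rpow_mul _ (1 / r),
            one_div_mul_cancel hr0.ne', ENNReal.rpow_one]
  have hlim : ∀ x, Filter.Tendsto (fun k => h k x ^ s) Filter.atTop (nhds (u x ^ r)) := by
    intro x
    have t1 : Filter.Tendsto (fun k : ℕ => (min (u x) (k:ℝ≥0∞)) ^ r) Filter.atTop
        (nhds (u x ^ r)) := by
      refine (ENNReal.continuous_rpow_const.tendsto _).comp ?_
      have := (tendsto_const_nhds (x := u x)).min ENNReal.tendsto_nat_nhds_top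
      simpa using this
    refine t1.congr' ?_
    obtain ⟨K, hK⟩ := exists_nat_gt ‖x‖
    filter_upwards [Filter.eventually_ge_atTop K] with k hk
    rw [hpow, Set.indicator_of_mem]
    rw [mem_ball_zero_iff]
    exact hK.trans_le (by exact_mod_cast hk)
  calc ∫⁻ x, u x ^ r = ∫⁻ x, Filter.liminf (fun k => h k x ^ s) Filter.atTop :=
        lintegral_congr fun x => (hlim x).liminf_eq.symm
    _ ≤ Filter.liminf (fun k => ∫⁻ x, h k x ^ s) Filter.atTop :=
        lintegral_liminf_le fun k => (hhm k).pow_const s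
    _ ≤ _ := Filter.liminf_le_of_le (by isBoundedDefault) (fun b hb => by
        obtain ⟨k, hk⟩ := hb.exists
        exact hk.trans (hA k))

/-- for `p ≥ q`, `‖G_λ^*(F)‖_{L^p} ≤ C ‖G(F)‖_{L^p}`. -/
theorem Glambda_Lp_le_G_Lp (n : ℕ) (p q lam : ℝ) (hq : 1 < q) (hp : 1 < p)
    (hqp : q ≤ p) (hlam : 1 < lam) :
    ∃ C : ℝ, 0 < C ∧ ∀ F : EuclideanSpace ℝ (Fin n) → ℝ → ℝ≥0∞,
      Measurable (Function.uncurry F) →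
      Np n p (GlambdaFn n q lam F) ≤ ENNReal.ofReal C * Np n p (GFn n q F) := by
  obtain ⟨C, hC, hCb⟩ := key_ineq n q hlam
  have hmain : ∃ D : ℝ≥0∞, D ≠ ⊤ ∧ ∀ F : EuclideanSpace ℝ (Fin n) → ℝ → ℝ≥0∞,
      Measurable (Function.uncurry F) →
      ∫⁻ x, uF n q lam F x ^ (p / q) ≤ D * ∫⁻ x, vF n q F x ^ (p / q) := by
    rcases hqp.eq_or_lt with h | h
    · refine ⟨C, hC, fun F hF => ?_⟩
      have := hCb F hF (fun _ => 1) measurable_const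
      rw [← h, div_self (by linarith)]
      simp only [one_mul, ENNReal.rpow_one] at this ⊢
      refine this.trans ?_
      gcongr with x
      calc _ ≤ vF n q F x * 1 := by gcongr; exact MF_le_of_le (fun _ => le_rfl) x
        _ = _ := mul_one _
    · obtain ⟨D, hD, hDb⟩ := dual_step n (r := p / q) ((one_lt_div (by linarith)).2 h) hC
      exact ⟨D, hD, fun F hF => hDb _ _ (measurable_uF hF) (measurable_vF hF) (hCb F hF)⟩
  obtain ⟨D, hD, hDb⟩ := hmain
  have hp0 : 0 ≤ 1 / p := by positivity
  refine ⟨(D ^ (1 / p)).toReal + 1, by positivity, fun F hF => ?_⟩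
  have e1 : ∀ x, GlambdaFn n q lam F x ^ p = uF n q lam F x ^ (p / q) := by
    intro x
    rw [GlambdaFn, ← uF, ← ENNReal.rpow_mul]; congr 1; ring
  have e2 : ∀ x, GFn n q F x ^ p = vF n q F x ^ (p / q) := by
    intro x
    rw [GFn, ← vF, ← ENNReal.rpow_mul]; congr 1; ring
  simp only [Np, e1, e2]
  calc _ ≤ (D * ∫⁻ x, vF n q F x ^ (p / q)) ^ (1 / p) := by gcongr; exact hDb F hF
    _ = D ^ (1 / p) * (∫⁻ x, vF n q F x ^ (p / q)) ^ (1 / p) :=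
        ENNReal.mul_rpow_of_nonneg _ _ hp0
    _ ≤ _ := by
        gcongr
        rw [← ENNReal.ofReal_toReal (ENNReal.rpow_ne_top_of_nonneg hp0 hD)]
        exact ENNReal.ofReal_le_ofReal (by rw [ENNReal.ofReal_toReal (ENNReal.rpow_ne_top_of_nonneg hp0 hD)]; linarith)
end

section
/- Let p, q, β ∈ (1,∞). Then there exists a constant C, independent of β and F, such that ‖S_β(F)‖_{L^p(R^n)} ≤ C β^{n(1/min{p,q} − 1/q)} ‖S(F)‖_{L^p(R^n)} for all measurable F on R^n × (0,∞), where S_β(F)(x) := (∫_0^1 (1/|B(x,βt)|)∫_{B(x,βt)} |F(y,t)|^q dy dt/t)^{1/q} and S := S_1. -/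
open MeasureTheory Metric
open scoped ENNReal

/-- The Lusin-area functional with aperture `β`:
`S_β(F)(x) = (∫_0^1 ⨍_{B(x,βt)} F(y,t)^q dy dt/t)^{1/q}`. -/
noncomputable def SFn (n : ℕ) (q β : ℝ)
    (F : EuclideanSpace ℝ (Fin n) → ℝ → ℝ≥0∞) (x : EuclideanSpace ℝ (Fin n)) : ℝ≥0∞ :=
  (∫⁻ t in Set.Ioo (0:ℝ) 1,
      (⨍⁻ y in ball x (β * t), F y t ^ q ∂volume) * ENNReal.ofReal t⁻¹) ^ (1 / q)

noncomputable def AAv (n : ℕ) (β : ℝ)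
    (G : EuclideanSpace ℝ (Fin n) → ℝ → ℝ≥0∞) (x : EuclideanSpace ℝ (Fin n)) : ℝ≥0∞ :=
  ∫⁻ t in Set.Ioo (0:ℝ) 1, (⨍⁻ y in ball x (β * t), G y t ∂volume) * ENNReal.ofReal t⁻¹

lemma vball (n : ℕ) (x : EuclideanSpace ℝ (Fin n)) {s : ℝ} (hs : 0 < s) :
    volume (ball x s) = ENNReal.ofReal (s ^ n) * volume (ball (0 : EuclideanSpace ℝ (Fin n)) 1) := by
  have := Measure.addHaar_ball_of_pos (volume : Measure (EuclideanSpace ℝ (Fin n))) x hs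
  simpa using this

lemma vball_ne_zero (n : ℕ) (x : EuclideanSpace ℝ (Fin n)) {s : ℝ} (hs : 0 < s) :
    volume (ball x s) ≠ 0 := (measure_ball_pos _ _ hs).ne'

lemma vball_ne_top (n : ℕ) (x : EuclideanSpace ℝ (Fin n)) (s : ℝ) :
    volume (ball x s) ≠ ∞ := measure_ball_lt_top.ne

lemma vball_scale (n : ℕ) (x y : EuclideanSpace ℝ (Fin n)) {s c : ℝ} (hs : 0 < s) (hc : 0 < c) :
    volume (ball x (c * s)) = ENNReal.ofReal (c ^ n) * volume (ball y s) := by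
  rw [vball n x (mul_pos hc hs), vball n y hs, mul_pow, ENNReal.ofReal_mul (by positivity), mul_assoc]

lemma set_eq_ind (n : ℕ) (x : EuclideanSpace ℝ (Fin n)) (s : ℝ)
    (f : EuclideanSpace ℝ (Fin n) → ℝ≥0∞) :
    ∫⁻ y in ball x s, f y = ∫⁻ y, (if dist y x < s then f y else 0) := by
  rw [← lintegral_indicator measurableSet_ball]
  rfl

lemma meas_int (n : ℕ) (β : ℝ) (G : EuclideanSpace ℝ (Fin n) → ℝ → ℝ≥0∞)
    (hG : Measurable (Function.uncurry G)) :
    Measurable (fun p : EuclideanSpace ℝ (Fin n) × ℝ => ⨍⁻ y in ball p.1 (β * p.2), G y p.2 ∂volume) := by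
  have h1 : Measurable (fun z : (EuclideanSpace ℝ (Fin n) × ℝ) × EuclideanSpace ℝ (Fin n) =>
      if dist z.2 z.1.1 < β * z.1.2 then G z.2 z.1.2 else 0) := by
    refine Measurable.ite (measurableSet_lt (by fun_prop) (by fun_prop)) ?_ measurable_const
    exact hG.comp (by fun_prop : Measurable fun z : (EuclideanSpace ℝ (Fin n) × ℝ) × EuclideanSpace ℝ (Fin n) => (z.2, z.1.2))
  have h2 := h1.lintegral_prod_right' (ν := volume)
  have h3 : Measurable (fun p : EuclideanSpace ℝ (Fin n) × ℝ => volume (ball p.1 (β * p.2))) := by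
    have : (fun p : EuclideanSpace ℝ (Fin n) × ℝ => volume (ball p.1 (β * p.2)))
      = fun p => (fun s : ℝ => volume (ball (0 : EuclideanSpace ℝ (Fin n)) s)) (β * p.2) := by
      funext p; exact Measure.addHaar_ball_center _ _ _
    rw [this]
    have hm : Monotone (fun s : ℝ => volume (ball (0 : EuclideanSpace ℝ (Fin n)) s)) :=
      fun a b h => measure_mono (ball_subset_ball h)
    exact hm.measurable.comp (by fun_prop)
  simp_rw [setLAverage_eq, set_eq_ind]
  exact h2.div h3

lemma meas_A (n : ℕ) (β : ℝ) (G : EuclideanSpace ℝ (Fin n) → ℝ → ℝ≥0∞)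
    (hG : Measurable (Function.uncurry G)) : Measurable (AAv n β G) := by
  have h := (meas_int n β G hG).mul ((by fun_prop : Measurable fun p : EuclideanSpace ℝ (Fin n) × ℝ => ENNReal.ofReal (p.2)⁻¹))
  exact h.lintegral_prod_right' (ν := volume.restrict (Set.Ioo (0:ℝ) 1))

lemma fub (n : ℕ) {β : ℝ} (hβ : 0 < β) (G : EuclideanSpace ℝ (Fin n) → ℝ → ℝ≥0∞)
    (hG : Measurable (Function.uncurry G)) (g : EuclideanSpace ℝ (Fin n) → ℝ≥0∞)
    (hg : Measurable g) :
    ∫⁻ x, AAv n β G x * g x = ∫⁻ t in Set.Ioo (0:ℝ) 1, ∫⁻ y,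
      (G y t * ENNReal.ofReal t⁻¹) * (⨍⁻ x in ball y (β * t), g x ∂volume) := by
  have h := (meas_int n β G hG).mul ((by fun_prop : Measurable fun p : EuclideanSpace ℝ (Fin n) × ℝ => ENNReal.ofReal (p.2)⁻¹))
  have e1 : ∀ x, AAv n β G x * g x = ∫⁻ t in Set.Ioo (0:ℝ) 1,
      (⨍⁻ y in ball x (β * t), G y t ∂volume) * ENNReal.ofReal t⁻¹ * g x := by
    intro x
    exact (lintegral_mul_const _ (h.comp (measurable_prodMk_left (x := x)))).symm
  simp_rw [e1]
  rw [lintegral_lintegral_swap]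
  swap
  · exact (h.mul (hg.comp measurable_fst)).aemeasurable
  refine setLIntegral_congr_fun measurableSet_Ioo ?_
  intro t ht
  have hGt : Measurable (fun y => G y t) := hG.comp (measurable_prodMk_right (y := t))
  set w := volume (ball (0 : EuclideanSpace ℝ (Fin n)) (β * t)) with hw
  have hb : ∀ x : EuclideanSpace ℝ (Fin n), volume (ball x (β * t)) = w :=
    fun x => Measure.addHaar_ball_center _ _ _
  simp only [setLAverage_eq, hb, set_eq_ind]
  have m1 : ∀ x : EuclideanSpace ℝ (Fin n), Measurable fun y => if dist y x < β * t then G y t else 0 :=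
    fun x => Measurable.ite (measurableSet_lt (by fun_prop) (by fun_prop)) hGt measurable_const
  have m2 : ∀ x : EuclideanSpace ℝ (Fin n), Measurable fun y => if dist y x < β * t then g y else 0 :=
    fun x => Measurable.ite (measurableSet_lt (by fun_prop) (by fun_prop)) hg measurable_const
  calc ∫⁻ x, (∫⁻ y, if dist y x < β * t then G y t else 0) / w * ENNReal.ofReal t⁻¹ * g x
      = ∫⁻ x, ∫⁻ y, (if dist y x < β * t then G y t else 0) * (w⁻¹ * ENNReal.ofReal t⁻¹ * g x) := by
        refine lintegral_congr fun x => ?_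
        rw [lintegral_mul_const _ (m1 x), div_eq_mul_inv]; ring
    _ = ∫⁻ y, ∫⁻ x, (if dist y x < β * t then G y t else 0) * (w⁻¹ * ENNReal.ofReal t⁻¹ * g x) := by
        refine lintegral_lintegral_swap (Measurable.aemeasurable ?_)
        refine Measurable.mul (Measurable.ite (measurableSet_lt (by fun_prop) (by fun_prop)) (hGt.comp measurable_snd) measurable_const) (by fun_prop)
    _ = _ := by
        refine lintegral_congr fun y => ?_
        rw [div_eq_mul_inv, ← lintegral_mul_const _ (m2 y), ← lintegral_const_mul _ ((m2 y).mul_const _)]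
        refine lintegral_congr fun x => ?_
        rw [dist_comm x y]
        split_ifs
        · ring
        · simp

lemma keyK (n : ℕ) {β : ℝ} (hβ : 0 < β) (G : EuclideanSpace ℝ (Fin n) → ℝ → ℝ≥0∞)
    (hG : Measurable (Function.uncurry G)) (g g' : EuclideanSpace ℝ (Fin n) → ℝ≥0∞)
    (hg : Measurable g) (hg' : Measurable g') (c : ℝ≥0∞)
    (H : ∀ y t, 0 < t → t < 1 → (⨍⁻ x in ball y (β * t), g x ∂volume) ≤ c * ⨍⁻ x in ball y t, g' x ∂volume)
    (hc : c ≠ ∞) :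
    ∫⁻ x, AAv n β G x * g x ≤ c * ∫⁻ x, AAv n 1 G x * g' x := by
  rw [fub n hβ G hG g hg, fub n one_pos G hG g' hg', ← lintegral_const_mul' _ _ hc]
  refine setLIntegral_mono' measurableSet_Ioo fun t ht => ?_
  rw [← lintegral_const_mul' _ _ hc]
  refine lintegral_mono fun y => ?_
  calc _ ≤ (G y t * ENNReal.ofReal t⁻¹) * (c * ⨍⁻ x in ball y t, g' x ∂volume) := by
        gcongr; exact H y t ht.1 ht.2
    _ = _ := by rw [one_mul]; ring

/-- truncated maximal function over rational radii -/
noncomputable def MMx (n : ℕ) (R : ℝ)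
    (g : EuclideanSpace ℝ (Fin n) → ℝ≥0∞) (x : EuclideanSpace ℝ (Fin n)) : ℝ≥0∞ :=
  ⨆ s : {s : ℚ // 0 < (s:ℝ) ∧ (s:ℝ) < R}, ⨍⁻ y in ball x ((s : ℚ) : ℝ), g y ∂volume

lemma meas_MM (n : ℕ) (R : ℝ) (g : EuclideanSpace ℝ (Fin n) → ℝ≥0∞) (hg : Measurable g) :
    Measurable (MMx n R g) := by
  refine Measurable.iSup fun s => ?_
  have h := meas_int n 1 (fun y _ => g y) (hg.comp measurable_fst)
  have h2 := h.comp (measurable_prodMk_right (y := ((s : ℚ) : ℝ)))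
  simpa [Function.comp_def] using h2

lemma weak (n : ℕ) (R : ℝ) (g : EuclideanSpace ℝ (Fin n) → ℝ≥0∞)
    (l : ℝ≥0∞) :
    l * volume {x | l < MMx n R g x} ≤ ENNReal.ofReal (6 ^ n) * ∫⁻ x, g x := by
  set W := {x | l < MMx n R g x} with hW
  have h1 : ∀ x : EuclideanSpace ℝ (Fin n), ∃ s : ℝ, x ∈ W → 0 < s ∧ s < R ∧
      l * volume (ball x s) ≤ ∫⁻ y in ball x s, g y := by
    intro x
    by_cases hx : x ∈ W
    · have hx' : l < MMx n R g x := hx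
      obtain ⟨s, hs⟩ := lt_iSup_iff.1 hx'
      refine ⟨s.1, fun _ => ⟨s.2.1, s.2.2, ?_⟩⟩
      rw [setLAverage_eq] at hs
      exact ENNReal.mul_le_of_le_div hs.le
    · exact ⟨0, fun h => absurd h hx⟩
  choose s hs using h1
  obtain ⟨u, huW, hdis, hcov⟩ := Vitali.exists_disjoint_subfamily_covering_enlargement_closedBall
    W (fun x => x) s R (fun a ha => (hs a ha).2.1.le) 5 (by norm_num)
  have hcount : u.Countable := hdis.countable_of_nonempty_interior fun a ha => by
    have : (ball a (s a)).Nonempty := nonempty_ball.2 (hs a (huW ha)).1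
    exact this.mono ball_subset_interior_closedBall
  have hsub : W ⊆ ⋃ b ∈ u, ball b (6 * s b) := by
    intro a ha
    obtain ⟨b, hb, hab⟩ := hcov a ha
    have h2 : a ∈ closedBall b (5 * s b) := hab (mem_closedBall_self (hs a ha).1.le)
    refine Set.mem_biUnion hb (closedBall_subset_ball ?_ h2)
    linarith [(hs b (huW hb)).1]
  have : Countable u := hcount.to_subtype
  calc l * volume W ≤ l * ∑' b : u, volume (ball (b : EuclideanSpace ℝ (Fin n)) (6 * s b)) := by
        gcongr
        refine (measure_mono hsub).trans ?_
        exact measure_biUnion_le _ hcount _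
    _ = ∑' b : u, ENNReal.ofReal (6 ^ n) * (l * volume (ball (b : EuclideanSpace ℝ (Fin n)) (s b))) := by
        rw [← ENNReal.tsum_mul_left]
        refine tsum_congr fun b => ?_
        rw [vball_scale n _ b.1 (hs b (huW b.2)).1 (by norm_num : (0:ℝ) < 6)]; ring
    _ ≤ ∑' b : u, ENNReal.ofReal (6 ^ n) * ∫⁻ y in ball (b : EuclideanSpace ℝ (Fin n)) (s b), g y := by
        gcongr with b
        exact (hs b (huW b.2)).2.2
    _ = ENNReal.ofReal (6 ^ n) * ∫⁻ y in ⋃ b ∈ u, ball b (s b), g y := by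
        rw [ENNReal.tsum_mul_left, lintegral_biUnion hcount (fun _ _ => measurableSet_ball)]
        exact hdis.mono fun _ => ball_subset_closedBall
    _ ≤ _ := by gcongr; exact Measure.restrict_le_self

lemma lc1_fin {p : ℝ} (hp : 0 < p) (a : ℝ) (ha : 0 ≤ a) :
    ∫⁻ t in Set.Ioi (0:ℝ), (if ENNReal.ofReal t < ENNReal.ofReal a then ENNReal.ofReal (p * t ^ (p - 1)) else 0)
      = ENNReal.ofReal a ^ p := by
  have h := lintegral_rpow_eq_lintegral_meas_lt_mul (Measure.dirac ()) (f := fun _ => a)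
    (Filter.Eventually.of_forall fun _ => ha) aemeasurable_const hp
  rw [lintegral_dirac] at h
  rw [ENNReal.ofReal_rpow_of_nonneg ha hp.le, h, ← lintegral_const_mul' _ _ ENNReal.ofReal_ne_top]
  refine setLIntegral_congr_fun measurableSet_Ioi fun t ht => ?_
  have ht : 0 < t := ht
  simp only [ENNReal.ofReal_lt_ofReal_iff_of_nonneg ht.le]
  split_ifs with h
  · simp [h, ENNReal.ofReal_mul hp.le]
  · simp [h]

lemma lc1 {p : ℝ} (hp : 0 < p) (h : ℝ≥0∞) :
    ∫⁻ t in Set.Ioi (0:ℝ), (if ENNReal.ofReal t < h then ENNReal.ofReal (p * t ^ (p - 1)) else 0)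
      = h ^ p := by
  by_cases hh : h = ∞
  · subst hh
    rw [ENNReal.top_rpow_of_pos hp]
    refine ENNReal.eq_top_of_forall_nnreal_le fun r => ?_
    have := lc1_fin hp ((r:ℝ) ^ (1/p)) (by positivity)
    rw [ENNReal.ofReal_rpow_of_nonneg (by positivity) hp.le, ← Real.rpow_mul r.coe_nonneg] at this
    rw [one_div_mul_cancel hp.ne', Real.rpow_one, ENNReal.ofReal_coe_nnreal] at this
    rw [← this]
    refine lintegral_mono fun t => ?_
    simp only [ENNReal.ofReal_lt_top, if_true]
    split_ifs <;> simp
  · have := lc1_fin hp h.toReal ENNReal.toReal_nonneg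
    rwa [ENNReal.ofReal_toReal hh] at this

lemma lc {α : Type*} [MeasurableSpace α] (ν : Measure α) [SFinite ν] {p : ℝ} (hp : 0 < p) (h : α → ℝ≥0∞) (hm : Measurable h) :
    ∫⁻ x, h x ^ p ∂ν = ∫⁻ t in Set.Ioi (0:ℝ), ENNReal.ofReal (p * t ^ (p - 1)) * ν {x | ENNReal.ofReal t < h x} := by
  simp_rw [← lc1 hp]
  rw [lintegral_lintegral_swap]
  · refine lintegral_congr fun t => ?_
    have hs : MeasurableSet {x | ENNReal.ofReal t < h x} := measurableSet_lt measurable_const hm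
    rw [← lintegral_indicator_const hs]
    refine lintegral_congr fun x => ?_
    simp only [Set.indicator, Set.mem_ofPred_eq]
  · refine Measurable.aemeasurable (Measurable.ite (measurableSet_lt (by fun_prop) (by fun_prop)) (by fun_prop) measurable_const)

lemma lc2 {r : ℝ} (hr : 0 < r) (hr1 : r < 1) (h : ℝ≥0∞) :
    (∫⁻ t in Set.Ioi (0:ℝ), (if h ≤ ENNReal.ofReal t then ENNReal.ofReal (r * t ^ (r - 2)) else 0)) * h
      ≤ ENNReal.ofReal (r / (1 - r)) * h ^ r := by
  by_cases hh : h = ∞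
  · subst hh; simp
  by_cases h0 : h = 0
  · subst h0; simp
  obtain ⟨a, ha, rfl⟩ : ∃ a : ℝ, 0 < a ∧ h = ENNReal.ofReal a :=
    ⟨h.toReal, ENNReal.toReal_pos h0 hh, (ENNReal.ofReal_toReal hh).symm⟩
  have e : ∫⁻ t in Set.Ioi (0:ℝ), (if ENNReal.ofReal a ≤ ENNReal.ofReal t then ENNReal.ofReal (r * t ^ (r - 2)) else 0)
      = ENNReal.ofReal (r * (a ^ (r - 1) / (1 - r))) := by
    have e1 : ∫⁻ t in Set.Ioi (0:ℝ), (if ENNReal.ofReal a ≤ ENNReal.ofReal t then ENNReal.ofReal (r * t ^ (r - 2)) else 0)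
       = ∫⁻ t in Set.Ioi (0:ℝ), (Set.Ici a).indicator (fun t => ENNReal.ofReal (r * t ^ (r - 2))) t := by
      refine setLIntegral_congr_fun measurableSet_Ioi fun t ht => ?_
      have ht : 0 < t := ht
      simp only [ENNReal.ofReal_le_ofReal_iff ht.le, Set.indicator, Set.mem_Ici]
    rw [e1, lintegral_indicator measurableSet_Ici, Measure.restrict_restrict measurableSet_Ici,
      Set.inter_eq_left.2 (Set.Ici_subset_Ioi.2 ha), setLIntegral_congr Ioi_ae_eq_Ici.symm,
      ← ofReal_integral_eq_lintegral_ofReal]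
    · rw [integral_const_mul, integral_Ioi_rpow_of_lt (by linarith) ha]
      congr 2
      rw [show r - 2 + 1 = -(1 - r) by ring, neg_div_neg_eq, neg_sub]
    · exact ((integrableOn_Ioi_rpow_iff ha).2 (by linarith)).const_mul _
    · filter_upwards [ae_restrict_mem measurableSet_Ioi] with t ht
      have : 0 < t := ha.trans ht
      positivity
  rw [e, ENNReal.ofReal_rpow_of_pos ha, ← ENNReal.ofReal_mul' ha.le, ← ENNReal.ofReal_mul' (by positivity)]
  refine ENNReal.ofReal_le_ofReal (le_of_eq ?_)
  rw [Real.rpow_sub_one ha.ne']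
  have : 1 - r ≠ 0 := by linarith
  field_simp

lemma strong (n : ℕ) {s : ℝ} (hs : 1 < s) : ∃ C : ℝ, 0 < C ∧ ∀ (R : ℝ)
    (g : EuclideanSpace ℝ (Fin n) → ℝ≥0∞), Measurable g →
    ∫⁻ x, MMx n R g x ^ s ≤ ENNReal.ofReal C * ∫⁻ x, g x ^ s := by
  refine ⟨2 * 6 ^ n * (s / (s - 1)) * 2 ^ (s - 1), by have : 0 < s - 1 := by linarith
                                                      positivity, fun R g hg => ?_⟩
  have hs1 : 0 < s - 1 := by linarith
  rw [lc volume (by linarith) _ (meas_MM n R g hg)]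
  have hw : ∀ t : ℝ, 0 < t → ENNReal.ofReal t * volume {x | ENNReal.ofReal t < MMx n R g x} ≤
      ENNReal.ofReal (2 * 6 ^ n) * ∫⁻ x, (if ENNReal.ofReal t < 2 * g x then g x else 0) := by
    intro t ht
    set g1 : EuclideanSpace ℝ (Fin n) → ℝ≥0∞ := fun x => if ENNReal.ofReal t < 2 * g x then g x else 0 with hg1
    have hle : ∀ x, g x ≤ g1 x + ENNReal.ofReal (t / 2) := by
      intro x
      simp only [hg1]
      split_ifs with h
      · exact le_self_add
      · rw [not_lt] at h
        rw [zero_add, ENNReal.ofReal_div_of_pos two_pos]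
        rw [ENNReal.le_div_iff_mul_le (by simp) (by simp)]
        simpa [mul_comm] using h
    have hM : ∀ x, MMx n R g x ≤ MMx n R g1 x + ENNReal.ofReal (t / 2) := by
      intro x
      refine iSup_le fun σ => ?_
      calc _ ≤ (⨍⁻ y in ball x ((σ : ℚ) : ℝ), (g1 y + ENNReal.ofReal (t / 2)) ∂volume) :=
            lintegral_mono fun y => hle y
        _ ≤ (⨍⁻ y in ball x ((σ : ℚ) : ℝ), g1 y ∂volume) + ENNReal.ofReal (t / 2) := by
            rw [setLAverage_eq, setLAverage_eq, lintegral_add_right _ measurable_const, ENNReal.add_div]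
            gcongr
            rw [setLIntegral_const]
            exact ENNReal.div_le_of_le_mul le_rfl
        _ ≤ _ := by
            gcongr
            exact le_iSup (fun σ : {s : ℚ // 0 < (s:ℝ) ∧ (s:ℝ) < R} => ⨍⁻ y in ball x ((σ : ℚ) : ℝ), g1 y ∂volume) σ
    have hsub : {x | ENNReal.ofReal t < MMx n R g x} ⊆ {x | ENNReal.ofReal (t / 2) < MMx n R g1 x} := by
      intro x hx
      have h1 : ENNReal.ofReal t < MMx n R g1 x + ENNReal.ofReal (t / 2) := lt_of_lt_of_le hx (hM x)
      by_contra h2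
      have h2 : MMx n R g1 x ≤ ENNReal.ofReal (t / 2) := not_lt.1 h2
      have h3 := lt_of_lt_of_le h1 (add_le_add_left h2 _)
      rw [← ENNReal.ofReal_add (by positivity) (by positivity), add_halves] at h3
      exact lt_irrefl _ h3
    have hk := weak n R g1 (ENNReal.ofReal (t / 2))
    calc _ ≤ ENNReal.ofReal t * volume {x | ENNReal.ofReal (t / 2) < MMx n R g1 x} := by gcongr
      _ = 2 * (ENNReal.ofReal (t/2) * volume {x | ENNReal.ofReal (t / 2) < MMx n R g1 x}) := by
          rw [← mul_assoc]; congr 1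
          rw [show (2:ℝ≥0∞) = ENNReal.ofReal 2 by simp, ← ENNReal.ofReal_mul (by norm_num)]; congr 1; ring
      _ ≤ 2 * (ENNReal.ofReal (6 ^ n) * ∫⁻ x, g1 x) := by gcongr
      _ = _ := by rw [ENNReal.ofReal_mul (by norm_num)]; simp [mul_assoc]
  have hmm : Measurable (fun z : ℝ × EuclideanSpace ℝ (Fin n) => if ENNReal.ofReal z.1 < 2 * g z.2 then g z.2 else 0) :=
    Measurable.ite (measurableSet_lt (by fun_prop) (by fun_prop)) (by fun_prop) measurable_const
  calc ∫⁻ t in Set.Ioi (0:ℝ), ENNReal.ofReal (s * t ^ (s - 1)) * volume {x | ENNReal.ofReal t < MMx n R g x}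
      ≤ ∫⁻ t in Set.Ioi (0:ℝ), ∫⁻ x, ENNReal.ofReal (2 * 6 ^ n * (s / (s - 1))) * ((if ENNReal.ofReal t < 2 * g x then ENNReal.ofReal ((s - 1) * t ^ (s - 1 - 1)) else 0) * g x) := by
        refine setLIntegral_mono' measurableSet_Ioi fun t ht => ?_
        have ht : 0 < t := ht
        have e : ENNReal.ofReal (s * t ^ (s - 1)) = ENNReal.ofReal (s / (s - 1)) * ENNReal.ofReal ((s - 1) * t ^ (s - 1 - 1)) * ENNReal.ofReal t := by
          rw [← ENNReal.ofReal_mul (by positivity), ← ENNReal.ofReal_mul (by positivity)]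
          congr 1
          rw [Real.rpow_sub_one ht.ne' (s-1)]
          field_simp
        rw [e, mul_assoc]
        refine (mul_le_mul_right (hw t ht) _).trans (le_of_eq ?_)
        have hmt : Measurable fun x => if ENNReal.ofReal t < 2 * g x then g x else 0 := hmm.comp (measurable_prodMk_left (x := t))
        rw [← mul_assoc, ← lintegral_const_mul _ hmt]
        refine lintegral_congr fun x => ?_
        split_ifs
        · rw [ENNReal.ofReal_mul (p := 2 * 6 ^ n) (by positivity)]; ring
        · simp
    _ = ∫⁻ x, ENNReal.ofReal (2 * 6 ^ n * (s / (s - 1))) * ((2 * g x) ^ (s - 1) * g x) := by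
        rw [lintegral_lintegral_swap]
        · refine lintegral_congr fun x => ?_
          have m : Measurable (fun t : ℝ => if ENNReal.ofReal t < 2 * g x then ENNReal.ofReal ((s - 1) * t ^ (s - 1 - 1)) else 0) :=
            Measurable.ite (measurableSet_lt (by fun_prop) (by fun_prop)) (by fun_prop) measurable_const
          rw [lintegral_const_mul _ (m.mul_const _), lintegral_mul_const _ m, lc1 hs1]
        · refine Measurable.aemeasurable ?_
          refine Measurable.const_mul (Measurable.mul (Measurable.ite (measurableSet_lt (by fun_prop) (by fun_prop)) (by fun_prop) measurable_const) (by fun_prop)) _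
    _ = ∫⁻ x, ENNReal.ofReal (2 * 6 ^ n * (s / (s - 1)) * 2 ^ (s - 1)) * g x ^ s := by
        refine lintegral_congr fun x => ?_
        rw [ENNReal.mul_rpow_of_nonneg _ _ hs1.le, ENNReal.ofReal_mul (q := 2 ^ (s - 1)) (by positivity),
          ← ENNReal.ofReal_rpow_of_pos two_pos, ENNReal.ofReal_ofNat]
        have : g x ^ s = g x ^ (s - 1) * g x := by
          conv_lhs => rw [show s = (s - 1) + 1 by ring]
          rw [ENNReal.rpow_add_of_nonneg _ _ hs1.le zero_le_one, ENNReal.rpow_one]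
        rw [this]; ring
    _ = _ := lintegral_const_mul' _ _ ENNReal.ofReal_ne_top

lemma avg_compare (n : ℕ) (g : EuclideanSpace ℝ (Fin n) → ℝ≥0∞) (y z : EuclideanSpace ℝ (Fin n))
    {a σ k : ℝ} (ha : 0 < a) (hk : 0 < k) (hσ : 0 < σ) (hsub : ball y a ⊆ ball z σ) (hle : σ ≤ k * a) :
    (⨍⁻ x in ball y a, g x ∂volume) ≤ ENNReal.ofReal (k ^ n) * ⨍⁻ x in ball z σ, g x ∂volume := by
  rw [setLAverage_eq, setLAverage_eq]
  refine ENNReal.div_le_of_le_mul ?_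
  have h1 : volume (ball z σ) ≤ ENNReal.ofReal (k ^ n) * volume (ball y a) := by
    rw [← vball_scale n z y ha hk]
    exact measure_mono (ball_subset_ball hle)
  calc ∫⁻ x in ball y a, g x ≤ ∫⁻ x in ball z σ, g x := lintegral_mono_set hsub
    _ = (∫⁻ x in ball z σ, g x) / volume (ball z σ) * volume (ball z σ) :=
        (ENNReal.div_mul_cancel (vball_ne_zero n z hσ) (vball_ne_top n z σ)).symm
    _ ≤ (∫⁻ x in ball z σ, g x) / volume (ball z σ) * (ENNReal.ofReal (k ^ n) * volume (ball y a)) := by gcongr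
    _ = _ := by ring

lemma avg_one (n : ℕ) (y : EuclideanSpace ℝ (Fin n)) {a : ℝ} (ha : 0 < a) (c : ℝ≥0∞) :
    (⨍⁻ _x in ball y a, c ∂volume) = c :=
  setLAverage_const (vball_ne_zero n y ha) (vball_ne_top n y a) c

lemma case_eq (n : ℕ) {β : ℝ} (hβ : 1 < β) (G : EuclideanSpace ℝ (Fin n) → ℝ → ℝ≥0∞)
    (hG : Measurable (Function.uncurry G)) :
    ∫⁻ x, AAv n β G x ≤ ∫⁻ x, AAv n 1 G x := by
  have := keyK n (by linarith : 0 < β) G hG (fun _ => 1) (fun _ => 1) measurable_const measurable_const 1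
    (fun y t ht _ => by rw [avg_one n y (by positivity), avg_one n y ht, one_mul]) ENNReal.one_ne_top
  simpa using this

lemma exists_rad {β t : ℝ} (hβ : 1 < β) (ht : 0 < t) (ht1 : t < 1) :
    ∃ σ : {s : ℚ // 0 < (s:ℝ) ∧ (s:ℝ) < 4 * β}, 2 * β * t < ((σ:ℚ):ℝ) ∧ ((σ:ℚ):ℝ) < 3 * β * t := by
  have hb : 0 < β * t := by positivity
  have hb2 : β * t < β := by nlinarith
  obtain ⟨s, h1, h2⟩ := exists_rat_btwn (show 2 * β * t < 3 * β * t by nlinarith)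
  exact ⟨⟨s, by nlinarith, by nlinarith⟩, h1, h2⟩

lemma avg_le_MM (n : ℕ) {β t : ℝ} (hβ : 1 < β) (ht : 0 < t) (ht1 : t < 1)
    (g : EuclideanSpace ℝ (Fin n) → ℝ≥0∞) (y : EuclideanSpace ℝ (Fin n)) :
    (⨍⁻ x in ball y (β * t), g x ∂volume) ≤
      ENNReal.ofReal (3 ^ n) * ⨍⁻ x in ball y t, MMx n (4 * β) g x ∂volume := by
  obtain ⟨σ, h1, h2⟩ := exists_rad hβ ht ht1
  have hb : t < β * t := by nlinarith
  have key : ∀ z ∈ ball y t, (⨍⁻ x in ball y (β * t), g x ∂volume) ≤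
      ENNReal.ofReal (3 ^ n) * MMx n (4 * β) g z := by
    intro z hz
    refine (avg_compare n g y z (a := β * t) (σ := ((σ:ℚ):ℝ)) (k := 3) (by positivity) (by norm_num) σ.2.1 ?_ (by linarith)).trans ?_
    · refine ball_subset_ball' ?_
      rw [mem_ball, dist_comm] at hz
      linarith
    · gcongr
      exact le_iSup (fun σ : {s : ℚ // 0 < (s:ℝ) ∧ (s:ℝ) < 4 * β} => ⨍⁻ y in ball z ((σ : ℚ) : ℝ), g y ∂volume) σ
  calc _ = ⨍⁻ _z in ball y t, (⨍⁻ x in ball y (β * t), g x ∂volume) ∂volume := (avg_one n y ht _).symm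
    _ ≤ ⨍⁻ z in ball y t, (ENNReal.ofReal (3 ^ n) * MMx n (4 * β) g z) ∂volume := by
        generalize (⨍⁻ x in ball y (β * t), g x ∂volume) = c at key ⊢
        rw [setLAverage_eq, setLAverage_eq]
        exact ENNReal.div_le_div_right (setLIntegral_mono' measurableSet_ball key) _
    _ = _ := by
        rw [setLAverage_eq, setLAverage_eq, lintegral_const_mul' _ _ ENNReal.ofReal_ne_top, mul_div_assoc]

lemma absorb {r s : ℝ} (h : r.HolderConjugate s) (a D : ℝ≥0∞) (ha : a ≠ ∞)
    (H : a ≤ D * a ^ (1 / s)) : a ≤ D ^ r := by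
  by_cases h0 : a = 0
  · subst h0; simp
  have hr := h.pos
  have hs := h.symm.pos
  have e : a = a ^ (1 / r) * a ^ (1 / s) := by
    rw [← ENNReal.rpow_add _ _ h0 ha, one_div, one_div, h.inv_add_inv_eq_one, ENNReal.rpow_one]
  have n0 : a ^ (1 / s) ≠ 0 := by simp [ENNReal.rpow_eq_zero_iff, h0, ha]
  have nt : a ^ (1 / s) ≠ ∞ := ENNReal.rpow_ne_top_of_nonneg (by positivity) ha
  have h2 : a ^ (1 / r) * a ^ (1 / s) ≤ D * a ^ (1 / s) := by rw [← e]; exact H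
  have h3 : a ^ (1 / r) ≤ D := (ENNReal.mul_le_mul_iff_left n0 nt).1 h2
  calc a = (a ^ (1 / r)) ^ r := by rw [← ENNReal.rpow_mul, one_div_mul_cancel hr.ne', ENNReal.rpow_one]
    _ ≤ D ^ r := ENNReal.rpow_le_rpow h3 hr.le

lemma case_gt (n : ℕ) {r : ℝ} (hr : 1 < r) : ∃ C : ℝ, 0 < C ∧ ∀ β : ℝ, 1 < β →
    ∀ G : EuclideanSpace ℝ (Fin n) → ℝ → ℝ≥0∞, Measurable (Function.uncurry G) →
    ∫⁻ x, AAv n β G x ^ r ≤ ENNReal.ofReal C * ∫⁻ x, AAv n 1 G x ^ r := by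
  obtain ⟨s, hrs⟩ : ∃ s : ℝ, r.HolderConjugate s := ⟨_, Real.HolderConjugate.conjExponent hr⟩
  have hs : 1 < s := hrs.symm.lt
  have hr0 : 0 < r := by linarith
  have hs0 : 0 < s := by linarith
  obtain ⟨C, hC, HC⟩ := strong n hs
  refine ⟨(3 ^ n * C ^ (1 / s)) ^ r, by positivity, fun β hβ G hG => ?_⟩
  set A := AAv n 1 G with hA
  set h := AAv n β G with hh
  have mA : Measurable A := meas_A n 1 G hG
  have mh : Measurable h := meas_A n β G hG
  let hk : ℕ → EuclideanSpace ℝ (Fin n) → ℝ≥0∞ :=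
    fun k => (ball 0 (k:ℝ)).indicator (fun x => min (h x) (k : ℝ≥0∞))
  have mk : ∀ k, Measurable (hk k) := fun k => (mh.min measurable_const).indicator measurableSet_ball
  have hle : ∀ k x, hk k x ≤ h x := by
    intro k x
    by_cases hx : x ∈ ball (0 : EuclideanSpace ℝ (Fin n)) (k:ℝ)
    · simp only [hk, Set.indicator_of_mem hx]; exact min_le_left _ _
    · simp only [hk, Set.indicator_of_notMem hx]; exact zero_le
  have hfin : ∀ k, ∫⁻ x, hk k x ^ r ≠ ∞ := by
    intro k
    have : ∫⁻ x, hk k x ^ r ≤ (k : ℝ≥0∞) ^ r * volume (ball (0 : EuclideanSpace ℝ (Fin n)) (k:ℝ)) := by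
      rw [← lintegral_indicator_const measurableSet_ball]
      refine lintegral_mono fun x => ?_
      by_cases hx : x ∈ ball (0 : EuclideanSpace ℝ (Fin n)) (k:ℝ)
      · simp only [hk, Set.indicator_of_mem hx]
        exact ENNReal.rpow_le_rpow (min_le_right _ _) hr0.le
      · simp only [hk, Set.indicator_of_notMem hx]
        rw [ENNReal.zero_rpow_of_pos hr0]
    refine ne_top_of_le_ne_top ?_ this
    exact ENNReal.mul_ne_top (ENNReal.rpow_ne_top_of_nonneg hr0.le (ENNReal.natCast_ne_top k)) (vball_ne_top n _ _)
  have hbound : ∀ k, ∫⁻ x, hk k x ^ r ≤ ENNReal.ofReal ((3 ^ n * C ^ (1 / s)) ^ r) * ∫⁻ x, A x ^ r := by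
    intro k
    set g : EuclideanSpace ℝ (Fin n) → ℝ≥0∞ := fun x => hk k x ^ (r - 1) with hg
    have mg : Measurable g := (mk k).pow_const _
    have e1 : ∫⁻ x, hk k x ^ r ≤ ∫⁻ x, h x * g x := by
      refine lintegral_mono fun x => ?_
      have : hk k x ^ r = hk k x * hk k x ^ (r - 1) := by
        conv_lhs => rw [show r = 1 + (r - 1) by ring]
        rw [ENNReal.rpow_add_of_nonneg _ _ zero_le_one (by linarith), ENNReal.rpow_one]
      simp only [hg]
      rw [this]
      gcongr
      exact hle k x
    have e2 := keyK n (by linarith : 0 < β) G hG g (MMx n (4 * β) g) mg (meas_MM n _ g mg)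
      (ENNReal.ofReal (3 ^ n)) (fun y t ht ht1 => avg_le_MM n hβ ht ht1 g y) ENNReal.ofReal_ne_top
    have e3 := ENNReal.lintegral_mul_le_Lp_mul_Lq volume hrs mA.aemeasurable (meas_MM n (4 * β) g mg).aemeasurable
    have e4 : ∫⁻ x, g x ^ s = ∫⁻ x, hk k x ^ r := by
      refine lintegral_congr fun x => ?_
      simp only [hg]
      rw [← ENNReal.rpow_mul, hrs.sub_one_mul_conj]
    have e5 : (∫⁻ x, MMx n (4 * β) g x ^ s) ^ (1 / s) ≤
        ENNReal.ofReal (C ^ (1 / s)) * (∫⁻ x, hk k x ^ r) ^ (1 / s) := by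
      rw [← e4, ← ENNReal.ofReal_rpow_of_pos hC, ← ENNReal.mul_rpow_of_nonneg _ _ (by positivity)]
      exact ENNReal.rpow_le_rpow (HC _ g mg) (by positivity)
    have e6 : ∫⁻ x, hk k x ^ r ≤ (ENNReal.ofReal (3 ^ n * C ^ (1 / s)) * (∫⁻ x, A x ^ r) ^ (1 / r)) * (∫⁻ x, hk k x ^ r) ^ (1 / s) := by
      calc _ ≤ _ := e1
        _ ≤ _ := e2
        _ ≤ ENNReal.ofReal (3 ^ n) * ((∫⁻ x, A x ^ r) ^ (1 / r) * (ENNReal.ofReal (C ^ (1 / s)) * (∫⁻ x, hk k x ^ r) ^ (1 / s))) := by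
            gcongr
            exact e3.trans (by gcongr)
        _ = _ := by rw [ENNReal.ofReal_mul (by positivity)]; ring
    refine (absorb hrs _ _ (hfin k) e6).trans (le_of_eq ?_)
    rw [ENNReal.mul_rpow_of_nonneg _ _ hr0.le, ← ENNReal.rpow_mul, one_div_mul_cancel hr0.ne', ENNReal.rpow_one,
      ENNReal.ofReal_rpow_of_pos (by positivity)]
  refine le_of_tendsto' (lintegral_tendsto_of_tendsto_of_monotone (fun k => ((mk k).pow_const r).aemeasurable)
    (Filter.Eventually.of_forall fun x => ?_) (Filter.Eventually.of_forall fun x => ?_)) hbound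
  · intro i j hij
    refine ENNReal.rpow_le_rpow ?_ hr0.le
    have hij' : (i:ℝ) ≤ j := by exact_mod_cast hij
    by_cases hx : x ∈ ball (0 : EuclideanSpace ℝ (Fin n)) (i:ℝ)
    · have hx' := ball_subset_ball hij' hx
      simp only [hk, Set.indicator_of_mem hx, Set.indicator_of_mem hx']
      exact min_le_min le_rfl (by exact_mod_cast hij)
    · simp only [hk, Set.indicator_of_notMem hx]; exact zero_le
  · refine (ENNReal.continuous_rpow_const.tendsto _).comp ?_
    have t1 : Filter.Tendsto (fun k : ℕ => min (h x) (k : ℝ≥0∞)) Filter.atTop (nhds (min (h x) ∞)) :=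
      tendsto_const_nhds.min ENNReal.tendsto_nat_nhds_top
    rw [min_top_right] at t1
    refine t1.congr' ?_
    obtain ⟨N, hN⟩ := exists_nat_gt (dist x 0)
    filter_upwards [Filter.eventually_ge_atTop N] with k hkN
    have hx : x ∈ ball (0 : EuclideanSpace ℝ (Fin n)) (k:ℝ) :=
      lt_of_lt_of_le hN (by exact_mod_cast hkN)
    simp only [hk, Set.indicator_of_mem hx]

lemma good (n : ℕ) {β : ℝ} (hβ : 1 < β) (G : EuclideanSpace ℝ (Fin n) → ℝ → ℝ≥0∞)
    (hG : Measurable (Function.uncurry G)) (t : ℝ) (ht : 0 < t) :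
    volume {x | ENNReal.ofReal t < ENNReal.ofReal (β ^ n) * AAv n β G x} ≤
      ENNReal.ofReal (2 * 18 ^ n * β ^ n) * volume {x | ENNReal.ofReal t < AAv n 1 G x} +
      ENNReal.ofReal (2 * β ^ n) * (ENNReal.ofReal t⁻¹ *
        ∫⁻ x, if AAv n 1 G x ≤ ENNReal.ofReal t then AAv n 1 G x else 0) := by
  set A := AAv n 1 G with hA
  set B := AAv n β G with hB
  have mA : Measurable A := meas_A n 1 G hG
  have mB : Measurable B := meas_A n β G hG
  set O := {x | ENNReal.ofReal t < A x} with hO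
  have mO : MeasurableSet O := measurableSet_lt measurable_const mA
  let f : EuclideanSpace ℝ (Fin n) → ℝ≥0∞ := O.indicator (fun _ => 1)
  have mf : Measurable f := measurable_const.indicator mO
  have hβ0 : 0 < β := by linarith
  set ε : ℝ := (2 * (3 * β) ^ n)⁻¹ with hε
  have hε0 : 0 < ε := by positivity
  set N := {x | ENNReal.ofReal ε < MMx n (4 * β) f x} with hN
  have mN : MeasurableSet N := measurableSet_lt measurable_const (meas_MM n _ f mf)
  let g : EuclideanSpace ℝ (Fin n) → ℝ≥0∞ := Nᶜ.indicator (fun _ => 1)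
  let g' : EuclideanSpace ℝ (Fin n) → ℝ≥0∞ := Oᶜ.indicator (fun _ => 1)
  have mg : Measurable g := measurable_const.indicator mN.compl
  have mg' : Measurable g' := measurable_const.indicator mO.compl
  have hK := keyK n hβ0 G hG g g' mg mg' 2 (by
    intro y τ hτ hτ1
    by_cases hx : ∃ x ∈ ball y (β * τ), x ∉ N
    · obtain ⟨x, hxb, hxN⟩ := hx
      have l1 : (⨍⁻ x in ball y (β * τ), g x ∂volume) ≤ 1 := by
        rw [← avg_one n y (a := β * τ) (by positivity) 1]
        refine lintegral_mono fun z => ?_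
        exact Set.indicator_le_self' (fun _ _ => zero_le) z
      have l2 : (⨍⁻ x in ball y τ, f x ∂volume) ≤ ENNReal.ofReal (1 / 2) := by
        obtain ⟨σ, h1, h2⟩ := exists_rad hβ hτ hτ1
        have hb : τ < β * τ := by nlinarith
        refine (avg_compare n f y x (a := τ) (σ := ((σ:ℚ):ℝ)) (k := 3 * β) hτ (by positivity) σ.2.1 ?_ h2.le).trans ?_
        · refine ball_subset_ball' ?_
          rw [mem_ball, dist_comm] at hxb
          linarith
        · have l3 : MMx n (4 * β) f x ≤ ENNReal.ofReal ε := not_lt.1 hxN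
          have l4 := (le_iSup (fun σ : {s : ℚ // 0 < (s:ℝ) ∧ (s:ℝ) < 4 * β} => ⨍⁻ y in ball x ((σ : ℚ) : ℝ), f y ∂volume) σ).trans l3
          refine (mul_le_mul_right l4 _).trans (le_of_eq ?_)
          rw [← ENNReal.ofReal_mul (by positivity)]
          congr 1
          rw [hε]; field_simp
      have l5 : (1 : ℝ≥0∞) = (⨍⁻ x in ball y τ, f x ∂volume) + ⨍⁻ x in ball y τ, g' x ∂volume := by
        rw [setLAverage_eq, setLAverage_eq, ← ENNReal.add_div, ← lintegral_add_left mf, ← setLAverage_eq]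
        rw [← avg_one n y (a := τ) hτ 1]
        congr 1
        funext z
        by_cases hz : z ∈ O <;> simp [f, g', hz]
      have l6 : ENNReal.ofReal (1/2) ≤ ⨍⁻ x in ball y τ, g' x ∂volume := by
        by_contra hcon
        rw [not_le] at hcon
        have := ENNReal.add_lt_add_of_le_of_lt (ne_top_of_le_ne_top ENNReal.ofReal_ne_top l2) l2 hcon
        rw [← l5, ← ENNReal.ofReal_add (by norm_num) (by norm_num), add_halves, ENNReal.ofReal_one] at this
        exact lt_irrefl _ this
      calc _ ≤ (1:ℝ≥0∞) := l1
        _ = 2 * ENNReal.ofReal (1/2) := by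
            rw [show (2:ℝ≥0∞) = ENNReal.ofReal 2 by simp, ← ENNReal.ofReal_mul (by norm_num)]; simp
        _ ≤ _ := by gcongr
    · push Not at hx
      have : ∫⁻ x in ball y (β * τ), g x = 0 := by
        rw [setLIntegral_congr_fun (g := fun _ => 0) measurableSet_ball]
        · simp
        · intro z hz
          simp [g, hx z hz]
      rw [setLAverage_eq, this]
      simp) (by simp)
  have hNvol : volume N ≤ ENNReal.ofReal (2 * 18 ^ n * β ^ n) * volume O := by
    have hw := weak n (4 * β) f (ENNReal.ofReal ε)
    have hf : ∫⁻ x, f x = volume O := by simp [f, lintegral_indicator mO]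
    rw [hf] at hw
    have e : volume N = ENNReal.ofReal (2 * (3 * β) ^ n) * (ENNReal.ofReal ε * volume N) := by
      rw [← mul_assoc, ← ENNReal.ofReal_mul (by positivity), hε, mul_inv_cancel₀ (by positivity)]; simp
    rw [e]
    refine (mul_le_mul_right hw _).trans (le_of_eq ?_)
    rw [← mul_assoc, ← ENNReal.ofReal_mul (by positivity)]
    congr 2
    rw [mul_pow, show (18:ℝ) = 3 * 6 by norm_num, mul_pow]; ring
  have hsub : {x | ENNReal.ofReal t < ENNReal.ofReal (β ^ n) * B x} ⊆
      N ∪ {x | ENNReal.ofReal t ≤ ENNReal.ofReal (β ^ n) * (B x * g x)} := by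
    intro x hx
    by_cases hxN : x ∈ N
    · exact Or.inl hxN
    · right
      have : g x = 1 := by simp [g, hxN]
      simp only [Set.mem_ofPred_eq, this, mul_one]
      exact le_of_lt hx
  have hmk := mul_meas_ge_le_lintegral (μ := volume) ((mB.mul mg).const_mul (ENNReal.ofReal (β ^ n))) (ENNReal.ofReal t)
  rw [lintegral_const_mul' _ _ ENNReal.ofReal_ne_top] at hmk
  have hg'i : ∫⁻ x, A x * g' x = ∫⁻ x, if A x ≤ ENNReal.ofReal t then A x else 0 := by
    refine lintegral_congr fun x => ?_
    by_cases hxO : ENNReal.ofReal t < A x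
    · simp [g', O, hxO]
    · simp [g', O, hxO, not_lt.1 hxO]
  refine (measure_mono hsub).trans ((measure_union_le _ _).trans (add_le_add hNvol ?_))
  set Y := {x | ENNReal.ofReal t ≤ ENNReal.ofReal (β ^ n) * (B x * g x)} with hY
  have e : volume Y = ENNReal.ofReal t⁻¹ * (ENNReal.ofReal t * volume Y) := by
    rw [← mul_assoc, ← ENNReal.ofReal_mul (by positivity), inv_mul_cancel₀ ht.ne']; simp
  rw [e, ← hg'i]
  calc _ ≤ ENNReal.ofReal t⁻¹ * (ENNReal.ofReal (β ^ n) * (2 * ∫⁻ x, A x * g' x)) := by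
        refine mul_le_mul_right ?_ _
        exact hmk.trans (mul_le_mul_right hK _)
    _ = _ := by
        rw [ENNReal.ofReal_mul (p := 2) (by norm_num), ENNReal.ofReal_ofNat]; ring

lemma case_lt (n : ℕ) {r : ℝ} (hr : 0 < r) (hr1 : r < 1) : ∃ C : ℝ, 0 < C ∧ ∀ β : ℝ, 1 < β →
    ∀ G : EuclideanSpace ℝ (Fin n) → ℝ → ℝ≥0∞, Measurable (Function.uncurry G) →
    ∫⁻ x, AAv n β G x ^ r ≤ ENNReal.ofReal (C * β ^ ((n:ℝ) * (1 - r))) * ∫⁻ x, AAv n 1 G x ^ r := by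
  have h1r : 0 < 1 - r := by linarith
  refine ⟨2 * 18 ^ n + 2 * (r / (1 - r)), by positivity, fun β hβ G hG => ?_⟩
  have hβ0 : 0 < β := by linarith
  have hgood := good n hβ G hG
  set A := AAv n 1 G with hA
  set B := AAv n β G with hB
  have mA : Measurable A := meas_A n 1 G hG
  have mB : Measurable B := meas_A n β G hG
  have main : ∫⁻ x, (ENNReal.ofReal (β ^ n) * B x) ^ r ≤
      ENNReal.ofReal ((2 * 18 ^ n + 2 * (r / (1 - r))) * β ^ n) * ∫⁻ x, A x ^ r := by
    rw [lc volume hr _ (mB.const_mul _)]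
    calc _ ≤ ∫⁻ t in Set.Ioi (0:ℝ), (ENNReal.ofReal (2 * 18 ^ n * β ^ n) * (ENNReal.ofReal (r * t ^ (r - 1)) * volume {x | ENNReal.ofReal t < A x}) +
          ENNReal.ofReal (2 * β ^ n) * ∫⁻ x, (if A x ≤ ENNReal.ofReal t then ENNReal.ofReal (r * t ^ (r - 2)) else 0) * A x) := by
          refine setLIntegral_mono' measurableSet_Ioi fun t ht => ?_
          have ht : 0 < t := ht
          refine (mul_le_mul_right (hgood t ht) _).trans (le_of_eq ?_)
          have e : ∫⁻ x, (if A x ≤ ENNReal.ofReal t then ENNReal.ofReal (r * t ^ (r - 2)) else 0) * A x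
            = ENNReal.ofReal (r * t ^ (r - 1)) * ENNReal.ofReal t⁻¹ * ∫⁻ x, if A x ≤ ENNReal.ofReal t then A x else 0 := by
            rw [← ENNReal.ofReal_mul (by positivity), ← lintegral_const_mul' _ _ ENNReal.ofReal_ne_top]
            refine lintegral_congr fun x => ?_
            split_ifs
            · congr 2
              rw [show r - 2 = r - 1 - 1 by ring, Real.rpow_sub_one ht.ne' (r - 1)]; field_simp
            · simp
          rw [e]; ring
      _ = ENNReal.ofReal (2 * 18 ^ n * β ^ n) * (∫⁻ x, A x ^ r) + ENNReal.ofReal (2 * β ^ n) *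
          ∫⁻ x, (∫⁻ t in Set.Ioi (0:ℝ), (if A x ≤ ENNReal.ofReal t then ENNReal.ofReal (r * t ^ (r - 2)) else 0)) * A x := by
          have mm : Measurable (fun z : ℝ × EuclideanSpace ℝ (Fin n) => (if A z.2 ≤ ENNReal.ofReal z.1 then ENNReal.ofReal (r * z.1 ^ (r - 2)) else 0) * A z.2) :=
            Measurable.mul (Measurable.ite (measurableSet_le (by fun_prop) (by fun_prop)) (by fun_prop) measurable_const) (by fun_prop)
          have m2 : Measurable (fun t : ℝ => ∫⁻ x, (if A x ≤ ENNReal.ofReal t then ENNReal.ofReal (r * t ^ (r - 2)) else 0) * A x) :=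
            mm.lintegral_prod_right' (ν := volume)
          rw [lintegral_add_right _ (m2.const_mul _), lintegral_const_mul' _ _ ENNReal.ofReal_ne_top,
            lintegral_const_mul' _ _ ENNReal.ofReal_ne_top, ← lc volume hr A mA, lintegral_lintegral_swap mm.aemeasurable]
          congr 2
          refine lintegral_congr fun x => ?_
          exact lintegral_mul_const _ (Measurable.ite (measurableSet_le (by fun_prop) (by fun_prop)) (by fun_prop) measurable_const)
      _ ≤ ENNReal.ofReal (2 * 18 ^ n * β ^ n) * (∫⁻ x, A x ^ r) + ENNReal.ofReal (2 * β ^ n) *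
          ∫⁻ x, ENNReal.ofReal (r / (1 - r)) * A x ^ r := by
          refine add_le_add le_rfl (mul_le_mul_right ?_ _)
          exact lintegral_mono fun x => lc2 hr hr1 (A x)
      _ = _ := by
          rw [lintegral_const_mul' _ _ ENNReal.ofReal_ne_top, ← mul_assoc, ← add_mul, ← ENNReal.ofReal_mul (by positivity),
            ← ENNReal.ofReal_add (by positivity) (by positivity)]
          congr 2; ring
  have e1 : ∫⁻ x, (ENNReal.ofReal (β ^ n) * B x) ^ r = ENNReal.ofReal (β ^ ((n:ℝ) * r)) * ∫⁻ x, B x ^ r := by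
    rw [← lintegral_const_mul' _ _ ENNReal.ofReal_ne_top]
    refine lintegral_congr fun x => ?_
    rw [ENNReal.mul_rpow_of_nonneg _ _ hr.le, ENNReal.ofReal_rpow_of_pos (by positivity), ← Real.rpow_natCast, ← Real.rpow_mul hβ0.le]
  rw [e1] at main
  have e2 : ∫⁻ x, B x ^ r = ENNReal.ofReal (β ^ (-((n:ℝ) * r))) * (ENNReal.ofReal (β ^ ((n:ℝ) * r)) * ∫⁻ x, B x ^ r) := by
    rw [← mul_assoc, ← ENNReal.ofReal_mul (by positivity), ← Real.rpow_add hβ0]; simp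
  rw [e2]
  refine (mul_le_mul_right main _).trans (le_of_eq ?_)
  rw [← mul_assoc, ← ENNReal.ofReal_mul (by positivity)]
  congr 2
  rw [show (n:ℝ) * (1 - r) = n + -((n:ℝ) * r) by ring, Real.rpow_add hβ0, Real.rpow_natCast]; ring

lemma all_cases (n : ℕ) (p q : ℝ) (hp : 1 < p) (hq : 1 < q) : ∃ C : ℝ, 0 < C ∧ ∀ β : ℝ, 1 < β →
    ∀ G : EuclideanSpace ℝ (Fin n) → ℝ → ℝ≥0∞, Measurable (Function.uncurry G) →
    ∫⁻ x, AAv n β G x ^ (p / q) ≤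
      ENNReal.ofReal (C * β ^ ((n : ℝ) * (1 / min p q - 1 / q) * p)) * ∫⁻ x, AAv n 1 G x ^ (p / q) := by
  have hp0 : 0 < p := by linarith
  have hq0 : 0 < q := by linarith
  rcases lt_trichotomy p q with h | h | h
  · obtain ⟨C, hC, H⟩ := case_lt n (r := p / q) (by positivity) ((div_lt_one hq0).2 h)
    refine ⟨C, hC, fun β hβ G hG => ?_⟩
    rw [min_eq_left h.le, show (n : ℝ) * (1 / p - 1 / q) * p = n * (1 - p / q) by field_simp]
    exact H β hβ G hG
  · subst h
    refine ⟨1, one_pos, fun β hβ G hG => ?_⟩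
    simpa [div_self hp0.ne'] using case_eq n hβ G hG
  · obtain ⟨C, hC, H⟩ := case_gt n (r := p / q) ((one_lt_div hq0).2 h)
    refine ⟨C, hC, fun β hβ G hG => ?_⟩
    rw [min_eq_right h.le]
    simpa using H β hβ G hG

lemma Np_eq (n : ℕ) (p q β : ℝ) (F : EuclideanSpace ℝ (Fin n) → ℝ → ℝ≥0∞) :
    Np n p (SFn n q β F) = (∫⁻ x, AAv n β (fun y t => F y t ^ q) x ^ (p / q)) ^ (1 / p) := by
  unfold Np
  congr 1
  refine lintegral_congr fun x => ?_
  have : SFn n q β F x = AAv n β (fun y t => F y t ^ q) x ^ (1 / q) := rfl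
  rw [this, ← ENNReal.rpow_mul]
  congr 1; ring

/-- `‖S_β(F)‖_{L^p} ≤ C β^{n(1/min(p,q) − 1/q)} ‖S(F)‖_{L^p}` with `C`
independent of `β` and `F`. -/
theorem Sbeta_Lp_bound (n : ℕ) (p q : ℝ) (hp : 1 < p) (hq : 1 < q) :
    ∃ C : ℝ, 0 < C ∧ ∀ β : ℝ, 1 < β → ∀ F : EuclideanSpace ℝ (Fin n) → ℝ → ℝ≥0∞,
      Measurable (Function.uncurry F) →
      Np n p (SFn n q β F) ≤
        ENNReal.ofReal (C * β ^ ((n : ℝ) * (1 / min p q - 1 / q))) * Np n p (SFn n q 1 F) := by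
  obtain ⟨C, hC, H⟩ := all_cases n p q hp hq
  have hp0 : 0 < p := by linarith
  refine ⟨C ^ (1 / p), by positivity, fun β hβ F hF => ?_⟩
  have hβ0 : 0 < β := by linarith
  have hG : Measurable (Function.uncurry (fun y t => F y t ^ q)) := hF.pow_const q
  rw [Np_eq, Np_eq]
  refine (ENNReal.rpow_le_rpow (H β hβ _ hG) (by positivity : 0 ≤ 1 / p)).trans (le_of_eq ?_)
  rw [ENNReal.mul_rpow_of_nonneg _ _ (by positivity), ENNReal.ofReal_rpow_of_pos (by positivity),
    Real.mul_rpow hC.le (by positivity), ← Real.rpow_mul hβ0.le]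
  congr 4
  field_simp
end

section
/- Let p ∈ (1,∞), q ∈ (1,∞), λ ∈ (q/p, ∞) with p < q, and let F be a nonnegative measurable function on R^n × (0,∞). Then ‖G_λ^*(F)‖_{L^p(R^n)} ≤ C Σ_{k=0}^∞ 2^{−kn(λ−1)/q} ‖S_{2^k}(F)‖_{L^p(R^n)}, and consequently, using ‖S_{2^k}(F)‖_{L^p} ≤ C 2^{kn(1/p − 1/q)}‖S(F)‖_{L^p}, one has ‖G_λ^*(F)‖_{L^p(R^n)} ≤ C' ‖S(F)‖_{L^p(R^n)}. -/
open MeasureTheory Metric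
open scoped ENNReal

lemma aux_tsum_rpow_le {r : ℝ} (hr : 0 < r) (hr1 : r ≤ 1) (a : ℕ → ℝ≥0∞) :
    (∑' k, a k) ^ r ≤ ∑' k, a k ^ r := by
  have h1 : Filter.Tendsto (fun N => (∑ k ∈ Finset.range N, a k) ^ r) Filter.atTop
      (nhds ((∑' k, a k) ^ r)) :=
    (ENNReal.continuous_rpow_const.tendsto _).comp (ENNReal.tendsto_nat_tsum a)
  refine le_of_tendsto' h1 fun N => ?_
  refine le_trans ?_ (ENNReal.sum_le_tsum (Finset.range N))
  induction N with
  | zero => simp [hr]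
  | succ N ih =>
    rw [Finset.sum_range_succ, Finset.sum_range_succ]
    exact (ENNReal.rpow_add_le_add_rpow _ _ hr.le hr1).trans (by gcongr)

lemma aux_minkowski {α : Type*} [MeasurableSpace α] (μ : Measure α) {p : ℝ} (hp : 1 ≤ p)
    (f : ℕ → α → ℝ≥0∞) (hf : ∀ k, Measurable (f k)) :
    (∫⁻ x, (∑' k, f k x) ^ p ∂μ) ^ (1 / p) ≤ ∑' k, (∫⁻ x, f k x ^ p ∂μ) ^ (1 / p) := by
  have hp0 : 0 < p := by linarith
  have hfin : ∀ N, (∫⁻ x, (∑ k ∈ Finset.range N, f k x) ^ p ∂μ) ^ (1 / p)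
      ≤ ∑' k, (∫⁻ x, f k x ^ p ∂μ) ^ (1 / p) := by
    intro N
    refine le_trans ?_ (ENNReal.sum_le_tsum (Finset.range N))
    induction N with
    | zero => simp [hp0]
    | succ N ih =>
      simp only [Finset.sum_range_succ]
      refine (ENNReal.lintegral_Lp_add_le (μ := μ)
        (f := fun x => ∑ k ∈ Finset.range N, f k x) (g := f N) ?_ (hf N).aemeasurable hp).trans ?_
      · exact (Finset.measurable_fun_sum _ fun k _ => hf k).aemeasurable
      · gcongr
  have h1 : ∫⁻ x, (∑' k, f k x) ^ p ∂μ = ⨆ N, ∫⁻ x, (∑ k ∈ Finset.range N, f k x) ^ p ∂μ := by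
    rw [← lintegral_iSup]
    · congr 1
      ext x
      rw [ENNReal.tsum_eq_iSup_nat]
      exact (ENNReal.orderIsoRpow p hp0).map_iSup _
    · intro N
      exact (Finset.measurable_fun_sum _ fun k _ => hf k).pow_const _
    · intro N M h x
      dsimp only
      gcongr
  rw [h1]
  have h2 : (⨆ N, ∫⁻ x, (∑ k ∈ Finset.range N, f k x) ^ p ∂μ) ^ (1 / p)
      = ⨆ N, (∫⁻ x, (∑ k ∈ Finset.range N, f k x) ^ p ∂μ) ^ (1 / p) :=
    (ENNReal.orderIsoRpow (1 / p) (by positivity)).map_iSup _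
  rw [h2]
  exact iSup_le hfin

lemma aux_lint_low {r : ℝ} (hr : 0 < r) {u : ℝ} (hu : 0 ≤ u) :
    ∫⁻ s in Set.Ioo (0:ℝ) u, ENNReal.ofReal (s ^ (r - 1)) = ENNReal.ofReal (u ^ r / r) := by
  have hi := intervalIntegral.intervalIntegrable_rpow' (a := 0) (b := u) (r := r - 1)
    (by linarith)
  rw [intervalIntegrable_iff_integrableOn_Ioc_of_le hu] at hi
  rw [setLIntegral_congr Ioo_ae_eq_Ioc, ← ofReal_integral_eq_lintegral_ofReal hi,
    ← intervalIntegral.integral_of_le hu, integral_rpow (Or.inl (by linarith))]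
  · simp [Real.zero_rpow hr.ne']
  · filter_upwards [ae_restrict_mem measurableSet_Ioc] with s hs
    exact Real.rpow_nonneg hs.1.le _

lemma aux_low_eq {r : ℝ} (hr : 0 < r) (u : ℝ≥0∞) :
    ∫⁻ s in Set.Ioi (0:ℝ), (if ENNReal.ofReal s < u then ENNReal.ofReal (s ^ (r - 1)) else 0)
      = u ^ r * ENNReal.ofReal (1 / r) := by
  have key : ∀ v : ℝ, 0 ≤ v →
      ∫⁻ s in Set.Ioi (0:ℝ), (if ENNReal.ofReal s < ENNReal.ofReal v
        then ENNReal.ofReal (s ^ (r - 1)) else 0) = ENNReal.ofReal v ^ r * ENNReal.ofReal (1 / r) := by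
    intro v hv
    rw [ENNReal.ofReal_rpow_of_nonneg hv hr.le, ← ENNReal.ofReal_mul (by positivity), mul_one_div,
      ← aux_lint_low hr hv, ← lintegral_indicator measurableSet_Ioi,
      ← lintegral_indicator measurableSet_Ioo]
    congr 1
    ext s
    by_cases hs : 0 < s
    · by_cases hsv : s < v
      · have : 0 < v := hs.trans hsv
        simp [Set.indicator, hs, hsv, this]
      · simp [Set.indicator, hs, hsv, ENNReal.ofReal_lt_ofReal_iff_of_nonneg hs.le]
    · simp [Set.indicator, hs]
  induction u with
  | coe u =>
    have := key u u.2
    simpa using this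
  | top =>
    rw [ENNReal.top_rpow_of_pos hr, ENNReal.top_mul (by simpa using hr)]
    rw [← top_le_iff]
    have ht : Filter.Tendsto (fun N : ℕ => ENNReal.ofReal (N:ℝ) ^ r * ENNReal.ofReal (1 / r))
        Filter.atTop (nhds ((⊤ : ℝ≥0∞) ^ r * ENNReal.ofReal (1 / r))) := by
      apply ENNReal.Tendsto.mul_const
      · apply (ENNReal.continuous_rpow_const.tendsto _).comp
        simpa using ENNReal.tendsto_nat_nhds_top
      · right; simp
    rw [ENNReal.top_rpow_of_pos hr, ENNReal.top_mul (by simpa using hr)] at ht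
    refine le_of_tendsto' ht fun N => ?_
    rw [← key N (by positivity)]
    gcongr with s
    split_ifs <;> simp_all

lemma aux_high_le {r : ℝ} (hr : 0 < r) (hr1 : r < 1) (u : ℝ≥0∞) :
    ∫⁻ s in Set.Ioi (0:ℝ), (if ENNReal.ofReal s < u then 0 else u * ENNReal.ofReal (s ^ (r - 2)))
      ≤ u ^ r * ENNReal.ofReal (1 / (1 - r)) := by
  induction u with
  | top => simp
  | coe u =>
    rcases eq_or_ne u 0 with rfl | hu
    · simp
    have hu0 : (0:ℝ) < u := by positivity
    have h1 : ∫⁻ s in Set.Ioi (0:ℝ), (if ENNReal.ofReal s < (u:ℝ≥0∞) then 0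
        else (u:ℝ≥0∞) * ENNReal.ofReal (s ^ (r - 2)))
        ≤ ∫⁻ s in Set.Ici (u:ℝ), (u:ℝ≥0∞) * ENNReal.ofReal (s ^ (r - 2)) := by
      rw [← lintegral_indicator measurableSet_Ioi, ← lintegral_indicator measurableSet_Ici]
      apply lintegral_mono
      intro s
      by_cases hs : 0 < s
      · by_cases hsv : s < u
        · have : ENNReal.ofReal s < (u:ℝ≥0∞) := by
            rw [← ENNReal.ofReal_coe_nnreal]
            exact (ENNReal.ofReal_lt_ofReal_iff hu0).2 hsv
          simp [Set.indicator, hs, this]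
        · have h' := not_lt.1 hsv
          have : ¬ ENNReal.ofReal s < (u:ℝ≥0∞) := by
            rw [← ENNReal.ofReal_coe_nnreal, not_lt]
            exact ENNReal.ofReal_le_ofReal h'
          simp [Set.indicator, hs, this, h']
      · simp [Set.indicator, hs]
    refine h1.trans ?_
    rw [setLIntegral_congr Ioi_ae_eq_Ici.symm, lintegral_const_mul' _ _ (by simp),
      ← ofReal_integral_eq_lintegral_ofReal (integrableOn_Ioi_rpow_of_lt (by linarith) hu0),
      integral_Ioi_rpow_of_lt (by linarith) hu0, ← ENNReal.ofReal_coe_nnreal,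
      ENNReal.ofReal_rpow_of_pos hu0, ← ENNReal.ofReal_mul (by positivity),
      ← ENNReal.ofReal_mul (by positivity)]
    · apply le_of_eq
      congr 1
      have : (u:ℝ) ^ r = u * (u:ℝ) ^ (r - 2 + 1) := by
        rw [← Real.rpow_one_add' (by positivity) (by linarith)]
        congr 1; ring
      rw [this]
      have h1 : r - 2 + 1 ≠ 0 := by linarith
      have h2 : 1 - r ≠ 0 := by linarith
      rw [show 1 - r = -(r - 2 + 1) by ring]
      field_simp
    · filter_upwards [ae_restrict_mem measurableSet_Ioi] with s hs
      exact Real.rpow_nonneg (hu0.le.trans hs.le) _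

lemma aux_vitali {n : ℕ} (hn : n ≠ 0) (E : Set (EuclideanSpace ℝ (Fin n))) (K : ℝ≥0∞)
    (hK : K ≠ 0) (hK' : K ≠ ⊤) :
    volume {x | ∃ ρ : ℝ, 0 < ρ ∧ volume (closedBall x ρ) < K * volume (E ∩ closedBall x ρ)}
      ≤ ENNReal.ofReal (5 ^ n) * K * volume E := by
  rcases eq_or_ne (volume E) ⊤ with hE | hE
  · rw [hE, ENNReal.mul_top]
    · exact le_top
    · have : ENNReal.ofReal (5 ^ n) ≠ 0 := by
        simp
      exact mul_ne_zero this hK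
  have hfr : Module.finrank ℝ (EuclideanSpace ℝ (Fin n)) = n := finrank_euclideanSpace_fin
  set c : ℝ≥0∞ := volume (ball (0 : EuclideanSpace ℝ (Fin n)) 1) with hc
  have hc0 : c ≠ 0 := (measure_ball_pos _ _ one_pos).ne'
  have hct : c ≠ ⊤ := measure_ball_lt_top.ne
  let T : Set (EuclideanSpace ℝ (Fin n) × ℝ) :=
    {a | 0 < a.2 ∧ volume (closedBall a.1 a.2) < K * volume (E ∩ closedBall a.1 a.2)}
  set R : ℝ := max 1 (K * volume E / c).toReal with hR
  have hbd : ∀ a ∈ T, a.2 ≤ R := by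
    rintro ⟨x, ρ⟩ ⟨h0, h1⟩
    dsimp only at h0 h1 ⊢
    rcases le_total ρ 1 with h | h
    · exact h.trans (le_max_left _ _)
    refine le_trans ?_ (le_max_right _ _)
    rw [Measure.addHaar_closedBall _ _ h0.le, hfr] at h1
    have h2 : ENNReal.ofReal (ρ ^ n) * c ≤ K * volume E :=
      h1.le.trans (by gcongr; exact Set.inter_subset_left)
    rw [← ENNReal.le_div_iff_mul_le (Or.inl hc0) (Or.inl hct)] at h2
    have h3 : ρ ^ n ≤ (K * volume E / c).toReal := by
      rw [← ENNReal.ofReal_le_iff_le_toReal]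
      · exact h2
      · exact ENNReal.div_ne_top (ENNReal.mul_ne_top hK' hE) hc0
    exact (le_self_pow₀ h hn).trans h3
  obtain ⟨u, huT, hdisj, hcov⟩ := Vitali.exists_disjoint_subfamily_covering_enlargement_closedBall
    T (fun a => a.1) (fun a => a.2) R hbd 5 (by norm_num)
  have hcount : u.Countable := by
    refine hdisj.countable_of_nonempty_interior fun a ha => ?_
    have h0 := (huT ha).1
    exact ⟨a.1, ball_subset_interior_closedBall (mem_ball_self h0)⟩
  have hsub : {x | ∃ ρ : ℝ, 0 < ρ ∧ volume (closedBall x ρ) < K * volume (E ∩ closedBall x ρ)}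
      ⊆ ⋃ a ∈ u, closedBall a.1 (5 * a.2) := by
    rintro x ⟨ρ, h0, h1⟩
    obtain ⟨b, hb, hb'⟩ := hcov (x, ρ) ⟨h0, h1⟩
    exact Set.mem_biUnion hb (hb' (mem_closedBall_self h0.le))
  have : Countable u := hcount.to_subtype
  calc _ ≤ volume (⋃ a ∈ u, closedBall a.1 (5 * a.2)) := measure_mono hsub
    _ ≤ ∑' a : u, volume (closedBall a.1.1 (5 * a.1.2)) := measure_biUnion_le _ hcount _
    _ ≤ ∑' a : u, ENNReal.ofReal (5 ^ n) * K * volume.restrict E (closedBall a.1.1 a.1.2) := by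
        apply ENNReal.tsum_le_tsum
        intro a
        have h := huT a.2
        rw [Measure.restrict_apply measurableSet_closedBall,
          Measure.addHaar_closedBall _ _ (by linarith [h.1]), hfr, mul_pow,
          ENNReal.ofReal_mul (by positivity), mul_assoc, mul_assoc]
        have h2 := h.2.le
        rw [Measure.addHaar_closedBall _ _ h.1.le, hfr] at h2
        rw [Set.inter_comm]
        gcongr
    _ = ENNReal.ofReal (5 ^ n) * K * volume.restrict E (⋃ a ∈ u, closedBall a.1 a.2) := by
        rw [ENNReal.tsum_mul_left, measure_biUnion hcount hdisj fun _ _ => measurableSet_closedBall]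
    _ ≤ _ := by
        exact mul_le_mul_right
          ((measure_mono (Set.subset_univ _)).trans (Measure.restrict_apply_univ _).le) _

/-- Unnormalised area functional. -/
noncomputable def UFn (n : ℕ) (β : ℝ)
    (H : EuclideanSpace ℝ (Fin n) → ℝ → ℝ≥0∞) (x : EuclideanSpace ℝ (Fin n)) : ℝ≥0∞ :=
  ∫⁻ t in Set.Ioo (0:ℝ) 1, ∫⁻ y, (if dist x y < β * t then H y t else 0)

lemma aux_meas3 {n : ℕ} (β : ℝ) {H : EuclideanSpace ℝ (Fin n) → ℝ → ℝ≥0∞}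
    (hH : Measurable (Function.uncurry H)) :
    Measurable (fun z : (EuclideanSpace ℝ (Fin n) × ℝ) × EuclideanSpace ℝ (Fin n) =>
      if dist z.1.1 z.2 < β * z.1.2 then H z.2 z.1.2 else 0) := by
  apply Measurable.ite
  · exact measurableSet_lt (by fun_prop) (by fun_prop)
  · exact hH.comp (f := fun z : (EuclideanSpace ℝ (Fin n) × ℝ) × EuclideanSpace ℝ (Fin n) =>
      (z.2, z.1.2)) (by fun_prop)
  · exact measurable_const

lemma aux_meas_U {n : ℕ} (β : ℝ) {H : EuclideanSpace ℝ (Fin n) → ℝ → ℝ≥0∞}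
    (hH : Measurable (Function.uncurry H)) : Measurable (UFn n β H) := by
  have h1 := (aux_meas3 β hH).lintegral_prod_right' (ν := volume)
  exact h1.lintegral_prod_right' (ν := volume.restrict (Set.Ioo (0:ℝ) 1))

lemma aux_tonelli {n : ℕ} (β : ℝ) {H : EuclideanSpace ℝ (Fin n) → ℝ → ℝ≥0∞}
    (hH : Measurable (Function.uncurry H)) (A : Set (EuclideanSpace ℝ (Fin n))) :
    ∫⁻ x in A, UFn n β H x =
      ∫⁻ t in Set.Ioo (0:ℝ) 1, ∫⁻ y, H y t * volume (ball y (β * t) ∩ A) := by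
  unfold UFn
  have h1 := (aux_meas3 β hH).lintegral_prod_right' (ν := volume)
  rw [lintegral_lintegral_swap h1.aemeasurable]
  congr 1
  ext t
  have h2 : Measurable (Function.uncurry fun x y : EuclideanSpace ℝ (Fin n) =>
      (if dist x y < β * t then H y t else 0)) :=
    (aux_meas3 β hH).comp (f := fun z : EuclideanSpace ℝ (Fin n) × EuclideanSpace ℝ (Fin n) =>
      ((z.1, t), z.2)) (by fun_prop)
  rw [lintegral_lintegral_swap h2.aemeasurable]
  congr 1
  ext y
  have : (fun x => if dist x y < β * t then H y t else 0)
      = (ball y (β * t)).indicator (fun _ => H y t) := by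
    ext x
    simp [Set.indicator, mem_ball]
  rw [this, lintegral_indicator measurableSet_ball, setLIntegral_const,
    Measure.restrict_apply measurableSet_ball]

lemma aux_key {n : ℕ} {β : ℝ} (hβ : 1 ≤ β) {H : EuclideanSpace ℝ (Fin n) → ℝ → ℝ≥0∞}
    (hH : Measurable (Function.uncurry H)) (E Es : Set (EuclideanSpace ℝ (Fin n)))
    (hE : MeasurableSet E)
    (hEs : {x | ∃ ρ : ℝ, 0 < ρ ∧ volume (closedBall x ρ)
      < ENNReal.ofReal (2 * (2 * β) ^ n) * volume (E ∩ closedBall x ρ)} ⊆ Es) :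
    ∫⁻ x in Esᶜ, UFn n β H x ≤ ENNReal.ofReal (2 * β ^ n) * ∫⁻ x in Eᶜ, UFn n 1 H x := by
  have hβ0 : 0 < β := by linarith
  have hfr : Module.finrank ℝ (EuclideanSpace ℝ (Fin n)) = n := finrank_euclideanSpace_fin
  rw [aux_tonelli β hH, aux_tonelli 1 hH, ← lintegral_const_mul' _ _ ENNReal.ofReal_ne_top]
  apply setLIntegral_mono' measurableSet_Ioo
  intro t ht
  rw [← lintegral_const_mul' _ _ ENNReal.ofReal_ne_top]
  apply lintegral_mono
  intro y
  dsimp only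
  rw [mul_left_comm]
  gcongr
  rw [one_mul]
  rcases Set.eq_empty_or_nonempty (ball y (β * t) ∩ Esᶜ) with h | ⟨x, hx, hxE⟩
  · rw [h]; simp
  have ht0 : 0 < t := ht.1
  have hx' : volume (closedBall x (2 * β * t)) ≥
      ENNReal.ofReal (2 * (2 * β) ^ n) * volume (E ∩ closedBall x (2 * β * t)) := by
    by_contra hcon
    exact hxE (hEs ⟨2 * β * t, by positivity, not_le.1 hcon⟩)
  set c : ℝ≥0∞ := volume (ball (0 : EuclideanSpace ℝ (Fin n)) 1) with hc
  have hB : volume (ball y t) = ENNReal.ofReal (t ^ n) * c := by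
    rw [Measure.addHaar_ball_of_pos _ _ ht0, hfr]
  have hBt : volume (ball y t) ≠ ⊤ := measure_ball_lt_top.ne
  have hsub : ball y t ⊆ closedBall x (2 * β * t) := by
    intro z hz
    rw [mem_ball] at hz hx
    rw [mem_closedBall]
    have := dist_triangle z y x
    rw [dist_comm y x] at this
    nlinarith
  have h1 : ENNReal.ofReal ((2 * β) ^ n) * (2 * volume (ball y t ∩ E))
      ≤ ENNReal.ofReal ((2 * β) ^ n) * volume (ball y t) := by
    calc _ = ENNReal.ofReal (2 * (2 * β) ^ n) * volume (E ∩ ball y t) := by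
            rw [ENNReal.ofReal_mul (by norm_num), Set.inter_comm]
            simp only [ENNReal.ofReal_ofNat]
            ring
      _ ≤ ENNReal.ofReal (2 * (2 * β) ^ n) * volume (E ∩ closedBall x (2 * β * t)) := by
            gcongr
      _ ≤ volume (closedBall x (2 * β * t)) := hx'
      _ = _ := by
            rw [Measure.addHaar_closedBall _ _ (by positivity), hfr, hB, mul_pow,
              ENNReal.ofReal_mul (by positivity), mul_assoc]
  have hpos : (0:ℝ) < (2 * β) ^ n := by positivity
  rw [ENNReal.mul_le_mul_iff_right (by simpa using hpos) (by simp)] at h1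
  have h2 : volume (ball y t) ≤ 2 * volume (ball y t ∩ Eᶜ) := by
    have h3 : volume (ball y t) = volume (ball y t ∩ E) + volume (ball y t ∩ Eᶜ) := by
      rw [← Set.sdiff_eq, measure_inter_add_sdiff _ hE]
    have h4 : volume (ball y t ∩ E) ≤ volume (ball y t ∩ Eᶜ) := by
      rw [h3, two_mul] at h1
      refine (ENNReal.add_le_add_iff_left ?_).1 h1
      exact ((measure_mono Set.inter_subset_left).trans_lt measure_ball_lt_top).ne
    rw [h3, two_mul]
    gcongr
  calc volume (ball y (β * t) ∩ Esᶜ) ≤ volume (ball y (β * t)) :=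
        measure_mono Set.inter_subset_left
    _ = ENNReal.ofReal (β ^ n) * volume (ball y t) := by
        rw [hB, Measure.addHaar_ball_of_pos _ _ (by positivity), hfr, mul_pow,
          ENNReal.ofReal_mul (by positivity), mul_assoc]
    _ ≤ ENNReal.ofReal (β ^ n) * (2 * volume (ball y t ∩ Eᶜ)) := by gcongr
    _ = _ := by
        rw [ENNReal.ofReal_mul (by norm_num)]
        simp only [ENNReal.ofReal_ofNat]
        ring

lemma aux_distr {n : ℕ} (hn : n ≠ 0) {β : ℝ} (hβ : 1 ≤ β)
    {H : EuclideanSpace ℝ (Fin n) → ℝ → ℝ≥0∞}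
    (hH : Measurable (Function.uncurry H)) {s : ℝ} (hs : 0 < s) :
    volume {x | ENNReal.ofReal s < UFn n β H x} ≤ ENNReal.ofReal (2 * 10 ^ n * β ^ n) *
      (volume {x | ENNReal.ofReal s < UFn n 1 H x} +
        ENNReal.ofReal s⁻¹ * ∫⁻ x in {x | ENNReal.ofReal s < UFn n 1 H x}ᶜ, UFn n 1 H x) := by
  have hβ0 : 0 < β := by linarith
  set E := {x | ENNReal.ofReal s < UFn n 1 H x} with hE
  have hEm : MeasurableSet E := measurableSet_lt measurable_const (aux_meas_U 1 hH)
  set E0 := {x | ∃ ρ : ℝ, 0 < ρ ∧ volume (closedBall x ρ)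
      < ENNReal.ofReal (2 * (2 * β) ^ n) * volume (E ∩ closedBall x ρ)} with hE0
  set Es := toMeasurable volume E0 with hEs
  have h1 : volume Es ≤ ENNReal.ofReal (2 * 10 ^ n * β ^ n) * volume E := by
    rw [hEs, measure_toMeasurable]
    have hpos : 0 < 2 * (2 * β) ^ n := by positivity
    refine (aux_vitali hn E _ (by rw [Ne, ENNReal.ofReal_eq_zero, not_le]; exact hpos)
      ENNReal.ofReal_ne_top).trans ?_
    rw [← ENNReal.ofReal_mul (by positivity)]
    apply le_of_eq
    congr 2
    rw [mul_pow, show (10:ℝ) = 5 * 2 by norm_num, mul_pow]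
    ring
  have h2 := aux_key hβ hH E Es hEm (subset_toMeasurable _ _)
  have h3 : volume ({x | ENNReal.ofReal s < UFn n β H x} ∩ Esᶜ) ≤
      ENNReal.ofReal s⁻¹ * ∫⁻ x in Esᶜ, UFn n β H x := by
    have hm := meas_ge_le_lintegral_div (μ := volume.restrict Esᶜ) (aux_meas_U β hH).aemeasurable
      (ε := ENNReal.ofReal s) (by simpa using hs) ENNReal.ofReal_ne_top
    rw [ENNReal.div_eq_inv_mul, ← ENNReal.ofReal_inv_of_pos hs] at hm
    refine le_trans ?_ hm
    rw [Measure.restrict_apply (measurableSet_le measurable_const (aux_meas_U β hH))]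
    apply measure_mono
    exact Set.inter_subset_inter_left _ fun x (hx : _ < _) =>
      (le_of_lt hx : ENNReal.ofReal s ≤ UFn n β H x)
  calc volume {x | ENNReal.ofReal s < UFn n β H x}
      ≤ volume (Es ∪ ({x | ENNReal.ofReal s < UFn n β H x} ∩ Esᶜ)) := by
        apply measure_mono
        intro x hx
        by_cases h : x ∈ Es
        · exact Or.inl h
        · exact Or.inr ⟨hx, h⟩
    _ ≤ volume Es + volume ({x | ENNReal.ofReal s < UFn n β H x} ∩ Esᶜ) := measure_union_le _ _
    _ ≤ ENNReal.ofReal (2 * 10 ^ n * β ^ n) * volume E +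
        ENNReal.ofReal s⁻¹ * (ENNReal.ofReal (2 * 10 ^ n * β ^ n) * ∫⁻ x in Eᶜ, UFn n 1 H x) := by
        gcongr
        refine h3.trans ?_
        gcongr
        refine h2.trans ?_
        gcongr
        have : (1:ℝ) ≤ 10 ^ n := one_le_pow₀ (by norm_num)
        linarith
    _ = _ := by ring

lemma aux_layer {n : ℕ} {r : ℝ} (hr : 0 < r) {u : EuclideanSpace ℝ (Fin n) → ℝ≥0∞}
    (hu : Measurable u) :
    (∫⁻ x, u x ^ r) * ENNReal.ofReal (1 / r) = ∫⁻ s in Set.Ioi (0:ℝ),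
      ENNReal.ofReal (s ^ (r - 1)) * volume {x | ENNReal.ofReal s < u x} := by
  rw [← lintegral_mul_const' _ _ ENNReal.ofReal_ne_top]
  simp_rw [← aux_low_eq hr]
  rw [lintegral_lintegral_swap]
  · congr 1
    ext s
    have : (fun x => if ENNReal.ofReal s < u x then ENNReal.ofReal (s ^ (r - 1)) else 0)
      = {x | ENNReal.ofReal s < u x}.indicator (fun _ => ENNReal.ofReal (s ^ (r - 1))) := by
      ext x
      simp [Set.indicator]
    rw [this, lintegral_indicator_const (measurableSet_lt measurable_const hu)]
  · apply Measurable.aemeasurable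
    apply Measurable.ite
    · exact measurableSet_lt (by fun_prop) (by fun_prop)
    · fun_prop
    · fun_prop

lemma aux_layer2 {n : ℕ} {r : ℝ} (hr : 0 < r) (hr1 : r < 1)
    {u : EuclideanSpace ℝ (Fin n) → ℝ≥0∞} (hu : Measurable u) :
    ∫⁻ s in Set.Ioi (0:ℝ), ENNReal.ofReal (s ^ (r - 1)) * (ENNReal.ofReal s⁻¹ *
      ∫⁻ x in {x | ENNReal.ofReal s < u x}ᶜ, u x) ≤
     (∫⁻ x, u x ^ r) * ENNReal.ofReal (1 / (1 - r)) := by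
  rw [← lintegral_mul_const' _ _ ENNReal.ofReal_ne_top]
  refine le_trans ?_ (lintegral_mono fun x => aux_high_le hr hr1 (u x))
  rw [lintegral_lintegral_swap]
  · apply setLIntegral_mono' measurableSet_Ioi
    intro s hs
    have hs0 : 0 < s := hs
    rw [← mul_assoc, ← ENNReal.ofReal_mul (by positivity), ← lintegral_indicator
      (measurableSet_lt measurable_const hu).compl, ← lintegral_const_mul' _ _ ENNReal.ofReal_ne_top]
    apply lintegral_mono
    intro x
    have : s ^ (r - 1) * s⁻¹ = s ^ (r - 2) := by
      rw [← Real.rpow_neg_one, ← Real.rpow_add hs0]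
      congr 1; ring
    rw [this]
    by_cases h : ENNReal.ofReal s < u x
    · simp [Set.indicator, h]
    · simp [Set.indicator, h, mul_comm]
  · apply Measurable.aemeasurable
    apply Measurable.ite
    · exact measurableSet_lt (by fun_prop) (by fun_prop)
    · fun_prop
    · fun_prop

lemma aux_aperture {n : ℕ} (hn : n ≠ 0) {r : ℝ} (hr : 0 < r) (hr1 : r < 1) {β : ℝ} (hβ : 1 ≤ β)
    {H : EuclideanSpace ℝ (Fin n) → ℝ → ℝ≥0∞}
    (hH : Measurable (Function.uncurry H)) :
    ∫⁻ x, UFn n β H x ^ r ≤ ENNReal.ofReal (r * (2 * 10 ^ n) * (1 / r + 1 / (1 - r)) * β ^ n) *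
      ∫⁻ x, UFn n 1 H x ^ r := by
  have hβ0 : 0 < β := by linarith
  have h1r : 0 < 1 - r := by linarith
  have h1 : (∫⁻ x, UFn n β H x ^ r) * ENNReal.ofReal (1 / r) ≤
      ENNReal.ofReal (2 * 10 ^ n * β ^ n) * ((∫⁻ x, UFn n 1 H x ^ r) * ENNReal.ofReal (1 / r) +
       (∫⁻ x, UFn n 1 H x ^ r) * ENNReal.ofReal (1 / (1 - r))) := by
    rw [aux_layer hr (aux_meas_U β hH)]
    calc _ ≤ ∫⁻ s in Set.Ioi (0:ℝ), ENNReal.ofReal (2 * 10 ^ n * β ^ n) *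
          (ENNReal.ofReal (s ^ (r - 1)) * volume {x | ENNReal.ofReal s < UFn n 1 H x} +
          ENNReal.ofReal (s ^ (r - 1)) * (ENNReal.ofReal s⁻¹ *
            ∫⁻ x in {x | ENNReal.ofReal s < UFn n 1 H x}ᶜ, UFn n 1 H x)) := by
          apply setLIntegral_mono' measurableSet_Ioi
          intro s hs
          rw [← mul_add, mul_left_comm]
          gcongr
          exact aux_distr hn hβ hH hs
      _ ≤ _ := by
          rw [lintegral_const_mul' _ _ ENNReal.ofReal_ne_top, lintegral_add_left,
            ← aux_layer hr (aux_meas_U 1 hH)]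
          · gcongr
            exact aux_layer2 hr hr1 (aux_meas_U 1 hH)
          · apply Measurable.mul (by fun_prop)
            have hm : MeasurableSet {z : ℝ × EuclideanSpace ℝ (Fin n) |
                ENNReal.ofReal z.1 < UFn n 1 H z.2} :=
              measurableSet_lt (by fun_prop) ((aux_meas_U 1 hH).comp measurable_snd)
            exact measurable_measure_prodMk_left hm
  calc _ = ENNReal.ofReal r * ((∫⁻ x, UFn n β H x ^ r) * ENNReal.ofReal (1 / r)) := by
        rw [mul_left_comm, ← ENNReal.ofReal_mul hr.le, mul_one_div_cancel hr.ne']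
        simp
    _ ≤ _ := mul_le_mul_right h1 _
    _ = _ := by
        rw [← mul_add, ← ENNReal.ofReal_add (by positivity) (by positivity), mul_comm
          (∫⁻ x, UFn n 1 H x ^ r), ← mul_assoc, ← mul_assoc, ← ENNReal.ofReal_mul hr.le,
          ← ENNReal.ofReal_mul (by positivity)]
        congr 2
        ring

/-- The density of the unnormalised functionals. -/
noncomputable def HFn (n : ℕ) (q : ℝ) (F : EuclideanSpace ℝ (Fin n) → ℝ → ℝ≥0∞)
    (y : EuclideanSpace ℝ (Fin n)) (t : ℝ) : ℝ≥0∞ :=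
  F y t ^ q * ENNReal.ofReal (t ^ (-(n : ℝ) - 1))

lemma aux_meas_H {n : ℕ} (q : ℝ) {F : EuclideanSpace ℝ (Fin n) → ℝ → ℝ≥0∞}
    (hF : Measurable (Function.uncurry F)) : Measurable (Function.uncurry (HFn n q F)) := by
  have : Function.uncurry (HFn n q F) = fun z => Function.uncurry F z ^ q *
      ENNReal.ofReal (z.2 ^ (-(n : ℝ) - 1)) := by
    ext ⟨y, t⟩; rfl
  rw [this]
  fun_prop

lemma aux_S_eq {n : ℕ} (q : ℝ) {β : ℝ} (hβ : 0 < β)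
    (F : EuclideanSpace ℝ (Fin n) → ℝ → ℝ≥0∞) (x : EuclideanSpace ℝ (Fin n)) :
    SFn n q β F x = (ENNReal.ofReal ((β ^ n)⁻¹) *
      (volume (ball (0 : EuclideanSpace ℝ (Fin n)) 1))⁻¹ * UFn n β (HFn n q F) x) ^ (1 / q) := by
  have hfr : Module.finrank ℝ (EuclideanSpace ℝ (Fin n)) = n := finrank_euclideanSpace_fin
  set c : ℝ≥0∞ := volume (ball (0 : EuclideanSpace ℝ (Fin n)) 1) with hc
  have hc0 : c ≠ 0 := (measure_ball_pos _ _ one_pos).ne'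
  have hct : c ≠ ⊤ := measure_ball_lt_top.ne
  unfold SFn UFn
  congr 1
  rw [← lintegral_const_mul' _ _ (ENNReal.mul_ne_top ENNReal.ofReal_ne_top (by simpa using hc0))]
  apply setLIntegral_congr_fun measurableSet_Ioo
  intro t ht
  have ht0 : 0 < t := ht.1
  dsimp only
  have h1 : (fun y => if dist x y < β * t then HFn n q F y t else 0) =
      (ball x (β * t)).indicator (fun y => F y t ^ q * ENNReal.ofReal (t ^ (-(n : ℝ) - 1))) := by
    ext y
    simp [Set.indicator, mem_ball, dist_comm, HFn]
  rw [h1, lintegral_indicator measurableSet_ball, lintegral_mul_const' _ _ ENNReal.ofReal_ne_top,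
    setLAverage_eq, Measure.addHaar_ball_of_pos _ _ (by positivity), hfr, ENNReal.div_eq_inv_mul,
    ENNReal.mul_inv (Or.inr hct) (Or.inr hc0), ← ENNReal.ofReal_inv_of_pos (by positivity)]
  have h2 : ENNReal.ofReal (((β * t) ^ n)⁻¹) * ENNReal.ofReal t⁻¹ =
      ENNReal.ofReal ((β ^ n)⁻¹) * ENNReal.ofReal (t ^ (-(n : ℝ) - 1)) := by
    rw [← ENNReal.ofReal_mul (by positivity), ← ENNReal.ofReal_mul (by positivity),
      sub_eq_add_neg, Real.rpow_add ht0, Real.rpow_neg ht0.le, Real.rpow_natCast,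
      Real.rpow_neg_one, mul_pow, mul_inv, mul_assoc]
  calc _ = (ENNReal.ofReal (((β * t) ^ n)⁻¹) * ENNReal.ofReal t⁻¹) *
        (c⁻¹ * ∫⁻ y in ball x (β * t), F y t ^ q) := by ring
    _ = _ := by rw [h2]; ring

lemma aux_weight {n : ℕ} {lam : ℝ} (hlam : 0 ≤ lam) {t d : ℝ} (ht : 0 < t) (hd : 0 ≤ d) :
    ∃ k : ℕ, d < 2 ^ k * t ∧ (t / (t + d)) ^ (lam * n) ≤
      (2:ℝ) ^ (lam * n) * (2:ℝ) ^ (-(k:ℝ) * (lam * n)) := by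
  have hex : ∃ k : ℕ, d < 2 ^ k * t := by
    obtain ⟨k, hk⟩ := pow_unbounded_of_one_lt (d / t) (one_lt_two (α := ℝ))
    exact ⟨k, (div_lt_iff₀ ht).1 hk⟩
  classical
  refine ⟨Nat.find hex, Nat.find_spec hex, ?_⟩
  have hmin := fun m => Nat.find_min hex (m := m)
  set k := Nat.find hex
  have hln : 0 ≤ lam * n := by positivity
  rw [Real.rpow_mul (by norm_num) (-(k:ℝ)), ← Real.mul_rpow (by norm_num) (by positivity)]
  apply Real.rpow_le_rpow (by positivity) _ hln
  rw [Real.rpow_neg (by norm_num), Real.rpow_natCast, div_le_iff₀ (by positivity)]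
  rcases Nat.eq_zero_or_pos k with h0 | h0
  · rw [h0]; norm_num; linarith
  · obtain ⟨m, hm⟩ : ∃ m, k = m + 1 := ⟨k - 1, by omega⟩
    have h1 := not_lt.1 (hmin m (by omega))
    rw [hm, pow_succ, mul_inv]
    have h2 : (2:ℝ) * (((2:ℝ) ^ m)⁻¹ * 2⁻¹) * (t + d) = ((2:ℝ) ^ m)⁻¹ * (t + d) := by ring
    rw [h2, inv_mul_eq_div, le_div_iff₀ (by positivity)]
    linarith

lemma aux_G_le {n : ℕ} {q lam : ℝ} (hq : 1 < q) (hlam : 0 ≤ lam)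
    {F : EuclideanSpace ℝ (Fin n) → ℝ → ℝ≥0∞} (hF : Measurable (Function.uncurry F))
    (x : EuclideanSpace ℝ (Fin n)) :
    GlambdaFn n q lam F x ≤ ∑' k : ℕ,
      (ENNReal.ofReal ((2:ℝ) ^ (lam * n) * (2:ℝ) ^ (-(k:ℝ) * (lam * n))) *
        UFn n (2 ^ k) (HFn n q F) x) ^ (1 / q) := by
  refine le_trans ?_ (aux_tsum_rpow_le (by positivity)
    (by rw [div_le_one (by linarith)]; exact hq.le) _)
  unfold GlambdaFn
  apply ENNReal.rpow_le_rpow _ (by positivity)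
  have hm : ∀ k : ℕ, Measurable (fun z : ℝ × EuclideanSpace ℝ (Fin n) =>
      if dist x z.2 < (2:ℝ) ^ k * z.1 then HFn n q F z.2 z.1 else 0) := fun k =>
    (aux_meas3 ((2:ℝ) ^ k) (aux_meas_H q hF)).comp
      (f := fun z : ℝ × EuclideanSpace ℝ (Fin n) => ((x, z.1), z.2)) (by fun_prop)
  calc _ ≤ ∫⁻ t in Set.Ioo (0:ℝ) 1, ∑' k : ℕ,
        ENNReal.ofReal ((2:ℝ) ^ (lam * n) * (2:ℝ) ^ (-(k:ℝ) * (lam * n))) *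
        ∫⁻ y, (if dist x y < (2:ℝ) ^ k * t then HFn n q F y t else 0) := by
        apply setLIntegral_mono' measurableSet_Ioo
        intro t ht
        simp_rw [← lintegral_const_mul' _ _ ENNReal.ofReal_ne_top]
        rw [← lintegral_mul_const' _ _ ENNReal.ofReal_ne_top, ← lintegral_tsum]
        · apply lintegral_mono
          intro y
          obtain ⟨k, hk, hk'⟩ := aux_weight (n := n) hlam ht.1 (dist_nonneg (x := x) (y := y))
          refine le_trans ?_ (ENNReal.le_tsum k)
          dsimp only
          rw [if_pos hk, HFn, mul_comm (F y t ^ q) (ENNReal.ofReal _), mul_assoc]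
          gcongr
        · intro k
          exact (((hm k).comp (measurable_prodMk_left (x := t))).const_mul _).aemeasurable
    _ = _ := by
        rw [lintegral_tsum]
        · congr 1
          ext k
          rw [lintegral_const_mul' _ _ ENNReal.ofReal_ne_top, UFn]
        · intro k
          exact ((hm k).lintegral_prod_right' (ν := volume)).const_mul _ |>.aemeasurable

lemma aux_Np_S {n : ℕ} {p q : ℝ} (hp : 1 < p) (hq : 1 < q) {β : ℝ} (hβ : 0 < β)
    (F : EuclideanSpace ℝ (Fin n) → ℝ → ℝ≥0∞) :
    Np n p (SFn n q β F) = (ENNReal.ofReal ((β ^ n)⁻¹) *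
      (volume (ball (0 : EuclideanSpace ℝ (Fin n)) 1))⁻¹) ^ (1 / q) *
      (∫⁻ x, UFn n β (HFn n q F) x ^ (p / q)) ^ (1 / p) := by
  have hc0 : volume (ball (0 : EuclideanSpace ℝ (Fin n)) 1) ≠ 0 :=
    (measure_ball_pos _ _ one_pos).ne'
  set A : ℝ≥0∞ := ENNReal.ofReal ((β ^ n)⁻¹) *
      (volume (ball (0 : EuclideanSpace ℝ (Fin n)) 1))⁻¹ with hA
  have hAt : A ≠ ⊤ := ENNReal.mul_ne_top ENNReal.ofReal_ne_top (by simpa using hc0)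
  have hp0 : 0 < p := by linarith
  have hq0 : 0 < q := by linarith
  unfold Np
  have : ∀ x, SFn n q β F x ^ p = A ^ (p / q) * UFn n β (HFn n q F) x ^ (p / q) := by
    intro x
    rw [aux_S_eq q hβ, ← hA, ← ENNReal.rpow_mul, ENNReal.mul_rpow_of_nonneg _ _ (by positivity)]
    rw [one_div_mul_eq_div]
  simp_rw [this]
  rw [lintegral_const_mul' _ _ (ENNReal.rpow_ne_top_of_nonneg (by positivity) hAt),
    ENNReal.mul_rpow_of_nonneg _ _ (by positivity), ← ENNReal.rpow_mul]
  congr 2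
  field_simp

lemma aux_first {n : ℕ} {p q lam : ℝ} (hp : 1 < p) (hq : 1 < q) (hlam : 0 ≤ lam)
    {F : EuclideanSpace ℝ (Fin n) → ℝ → ℝ≥0∞} (hF : Measurable (Function.uncurry F)) :
    Np n p (GlambdaFn n q lam F) ≤ (ENNReal.ofReal ((2:ℝ) ^ (lam * n)) *
        volume (ball (0 : EuclideanSpace ℝ (Fin n)) 1)) ^ (1 / q) *
      ∑' k : ℕ, ENNReal.ofReal ((2:ℝ) ^ (-(k : ℝ) * n * (lam - 1) / q)) *
                Np n p (SFn n q ((2:ℝ) ^ k) F) := by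
  set c : ℝ≥0∞ := volume (ball (0 : EuclideanSpace ℝ (Fin n)) 1) with hc
  have hc0 : c ≠ 0 := (measure_ball_pos _ _ one_pos).ne'
  have hct : c ≠ ⊤ := measure_ball_lt_top.ne
  have hp0 : 0 < p := by linarith
  have hq0 : 0 < q := by linarith
  calc Np n p (GlambdaFn n q lam F) ≤ (∫⁻ x, (∑' k : ℕ,
      (ENNReal.ofReal ((2:ℝ) ^ (lam * n) * (2:ℝ) ^ (-(k:ℝ) * (lam * n))) *
        UFn n (2 ^ k) (HFn n q F) x) ^ (1 / q)) ^ p) ^ (1 / p) := by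
        unfold Np
        gcongr with x
        exact aux_G_le hq hlam hF x
    _ ≤ ∑' k : ℕ, (∫⁻ x, ((ENNReal.ofReal ((2:ℝ) ^ (lam * n) * (2:ℝ) ^ (-(k:ℝ) * (lam * n))) *
        UFn n (2 ^ k) (HFn n q F) x) ^ (1 / q)) ^ p) ^ (1 / p) := by
        apply aux_minkowski _ hp.le
        intro k
        exact ((aux_meas_U _ (aux_meas_H q hF)).const_mul _).pow_const _
    _ = _ := by
        rw [← ENNReal.tsum_mul_left]
        congr 1
        ext k
        rw [aux_Np_S hp hq (by positivity), ← hc]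
        simp_rw [← ENNReal.rpow_mul, one_div_mul_eq_div]
        simp_rw [ENNReal.mul_rpow_of_nonneg _ _ (show 0 ≤ p / q by positivity)]
        rw [lintegral_const_mul' _ _ (ENNReal.rpow_ne_top_of_nonneg (by positivity)
          ENNReal.ofReal_ne_top), ENNReal.mul_rpow_of_nonneg _ _ (by positivity),
          ← ENNReal.rpow_mul, show p / q * (1 / p) = 1 / q by field_simp,
          ← mul_assoc (ENNReal.ofReal ((2:ℝ) ^ (-(k : ℝ) * n * (lam - 1) / q))),
          ← mul_assoc _ _ ((∫⁻ x, UFn n (2 ^ k) (HFn n q F) x ^ (p / q)) ^ (1 / p))]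
        congr 1
        have h1 : (2:ℝ) ^ (-(k : ℝ) * n * (lam - 1) / q) =
            ((2:ℝ) ^ (-(k : ℝ) * n * (lam - 1))) ^ (1 / q) := by
          rw [← Real.rpow_mul (by norm_num), mul_one_div]
        rw [h1, ← ENNReal.ofReal_rpow_of_nonneg (x := (2:ℝ) ^ (-(k : ℝ) * n * (lam - 1))) (by positivity) (by positivity),
          ← ENNReal.mul_rpow_of_nonneg _ _ (by positivity),
          ← ENNReal.mul_rpow_of_nonneg _ _ (by positivity)]
        congr 1
        have h2 : (2:ℝ) ^ (-(k:ℝ) * (lam * n)) =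
            (2:ℝ) ^ (-(k : ℝ) * n * (lam - 1)) * (((2:ℝ) ^ k) ^ n)⁻¹ := by
          rw [← pow_mul, ← Real.rpow_natCast, ← Real.rpow_neg (by norm_num),
            ← Real.rpow_add (by norm_num)]
          congr 1
          push_cast
          ring
        rw [h2, ENNReal.ofReal_mul (by positivity), ENNReal.ofReal_mul (by positivity)]
        calc _ = ENNReal.ofReal ((2:ℝ) ^ (lam * n)) *
              (ENNReal.ofReal ((2:ℝ) ^ (-(k : ℝ) * n * (lam - 1))) *
              ENNReal.ofReal (((2:ℝ) ^ k) ^ n)⁻¹) * (c * c⁻¹) := by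
              rw [ENNReal.mul_inv_cancel hc0 hct, mul_one]
          _ = _ := by ring

lemma aux_S_ap {n : ℕ} (hn : n ≠ 0) {p q : ℝ} (hp : 1 < p) (hq : 1 < q) (hpq : p < q)
    {F : EuclideanSpace ℝ (Fin n) → ℝ → ℝ≥0∞} (hF : Measurable (Function.uncurry F)) (k : ℕ) :
    Np n p (SFn n q (2 ^ k) F) ≤
      ENNReal.ofReal (p / q * (2 * 10 ^ n) * (1 / (p / q) + 1 / (1 - p / q))) ^ (1 / p) *
        ENNReal.ofReal ((2:ℝ) ^ ((k:ℝ) * n * (1 / p - 1 / q))) * Np n p (SFn n q 1 F) := by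
  have hp0 : 0 < p := by linarith
  have hq0 : 0 < q := by linarith
  have hr1 : p / q < 1 := (div_lt_one hq0).2 hpq
  have hr2 : 0 < 1 - p / q := by linarith
  set M := p / q * (2 * 10 ^ n) * (1 / (p / q) + 1 / (1 - p / q)) with hM
  have hM0 : 0 ≤ M := by positivity
  rw [aux_Np_S hp hq (by positivity), aux_Np_S hp hq one_pos]
  have h := aux_aperture hn (r := p / q) (by positivity) hr1
    (β := 2 ^ k) (one_le_pow₀ (by norm_num)) (aux_meas_H q hF)
  rw [← hM] at h
  set c : ℝ≥0∞ := volume (ball (0 : EuclideanSpace ℝ (Fin n)) 1) with hc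
  set I := ∫⁻ x, UFn n 1 (HFn n q F) x ^ (p / q)
  calc _ ≤ (ENNReal.ofReal ((((2:ℝ) ^ k) ^ n)⁻¹) * c⁻¹) ^ (1 / q) *
        (ENNReal.ofReal (M * ((2:ℝ) ^ k) ^ n) * I) ^ (1 / p) := by gcongr
    _ = ENNReal.ofReal M ^ (1 / p) * (ENNReal.ofReal ((((2:ℝ) ^ k) ^ n)⁻¹) ^ (1 / q) *
        ENNReal.ofReal (((2:ℝ) ^ k) ^ n) ^ (1 / p)) * (c⁻¹ ^ (1 / q) * I ^ (1 / p)) := by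
        rw [ENNReal.ofReal_mul hM0]
        repeat rw [ENNReal.mul_rpow_of_nonneg _ _ (by positivity)]
        ring
    _ = _ := by
        rw [ENNReal.ofReal_rpow_of_nonneg (by positivity) (by positivity),
          ENNReal.ofReal_rpow_of_nonneg (by positivity) (by positivity),
          ENNReal.ofReal_rpow_of_nonneg (by positivity) (by positivity),
          ← ENNReal.ofReal_mul (by positivity)]
        have h2 : ((((2:ℝ) ^ k) ^ n)⁻¹) ^ (1 / q) * (((2:ℝ) ^ k) ^ n) ^ (1 / p) =
            (2:ℝ) ^ ((k:ℝ) * n * (1 / p - 1 / q)) := by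
          rw [← pow_mul, ← Real.rpow_natCast, ← Real.rpow_neg (by norm_num),
            ← Real.rpow_mul (by norm_num), ← Real.rpow_mul (by norm_num),
            ← Real.rpow_add (by norm_num)]
          congr 1
          push_cast
          ring
        rw [h2]
        simp

lemma aux_const (K : ℝ≥0∞) (hK : K ≠ ⊤) : ∃ C : ℝ, 0 < C ∧ K ≤ ENNReal.ofReal C := by
  refine ⟨K.toReal + 1, by positivity, ?_⟩
  rw [ENNReal.le_ofReal_iff_toReal_le hK (by positivity)]
  linarith

lemma aux_zero (p q lam : ℝ) (F : EuclideanSpace ℝ (Fin 0) → ℝ → ℝ≥0∞) :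
    Np 0 p (GlambdaFn 0 q lam F) ≤ Np 0 p (SFn 0 q 1 F) := by
  have : GlambdaFn 0 q lam F = SFn 0 q 1 F := by
    ext x
    unfold GlambdaFn SFn
    congr 1
    apply setLIntegral_congr_fun measurableSet_Ioo
    intro t ht
    have ht0 : 0 < t := ht.1
    have hb : ball x (1 * t) = Set.univ := by
      ext y
      simp [Subsingleton.elim y x, ht0]
    have hv : volume (Set.univ : Set (EuclideanSpace ℝ (Fin 0))) = 1 := by
      have h := (EuclideanSpace.volume_preserving_symm_measurableEquiv_toLp (Fin 0)).measure_preimage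
        (s := Set.univ) MeasurableSet.univ.nullMeasurableSet
      rw [Set.preimage_univ] at h
      rw [h, volume_pi, Measure.pi_of_empty]
      simp
    dsimp only
    rw [hb, setLAverage_eq, hv]
    simp [Real.rpow_neg_one]
  rw [this]

/-- for `1 < p < q` and `λ > q/p`,
`‖G_λ^*(F)‖_{L^p} ≤ C Σ_k 2^{-kn(λ-1)/q} ‖S_{2^k}(F)‖_{L^p}` and consequently
`‖G_λ^*(F)‖_{L^p} ≤ C' ‖S(F)‖_{L^p}`. -/
theorem Glambda_le_sum_S (n : ℕ) (p q lam : ℝ) (hp : 1 < p) (hq : 1 < q) (hpq : p < q)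
    (hlam : q / p < lam) :
    ∃ C C' : ℝ, 0 < C ∧ 0 < C' ∧
      ∀ F : EuclideanSpace ℝ (Fin n) → ℝ → ℝ≥0∞, Measurable (Function.uncurry F) →
        Np n p (GlambdaFn n q lam F) ≤
            ENNReal.ofReal C *
              ∑' k : ℕ, ENNReal.ofReal ((2:ℝ) ^ (-(k : ℝ) * n * (lam - 1) / q)) *
                Np n p (SFn n q ((2:ℝ) ^ k) F) ∧
          Np n p (GlambdaFn n q lam F) ≤ ENNReal.ofReal C' * Np n p (SFn n q 1 F) := by
  have hp0 : 0 < p := by linarith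
  have hq0 : 0 < q := by linarith
  have hqp : 0 < q / p := by positivity
  have hlam0 : 0 ≤ lam := by linarith
  have hct : volume (ball (0 : EuclideanSpace ℝ (Fin n)) 1) ≠ ⊤ := measure_ball_lt_top.ne
  set K : ℝ≥0∞ := (ENNReal.ofReal ((2:ℝ) ^ (lam * n)) *
        volume (ball (0 : EuclideanSpace ℝ (Fin n)) 1)) ^ (1 / q) with hK
  have hKt : K ≠ ⊤ := ENNReal.rpow_ne_top_of_nonneg (by positivity)
    (ENNReal.mul_ne_top ENNReal.ofReal_ne_top hct)
  obtain ⟨C, hC0, hC⟩ := aux_const K hKt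
  rcases eq_or_ne n 0 with rfl | hn
  · refine ⟨C, 1, hC0, one_pos, fun F hF => ⟨?_, ?_⟩⟩
    · exact (aux_first hp hq hlam0 hF).trans (by gcongr)
    · simpa using aux_zero p q lam F
  set M : ℝ≥0∞ :=
    ENNReal.ofReal (p / q * (2 * 10 ^ n) * (1 / (p / q) + 1 / (1 - p / q))) ^ (1 / p) with hM
  have hMt : M ≠ ⊤ := ENNReal.rpow_ne_top_of_nonneg (by positivity) ENNReal.ofReal_ne_top
  set ρ : ℝ := (2:ℝ) ^ (-((n:ℝ) * (lam / q - 1 / p))) with hρ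
  have hρ0 : 0 ≤ ρ := by positivity
  have hρ1 : ρ < 1 := by
    apply Real.rpow_lt_one_of_one_lt_of_neg (by norm_num)
    have h1 : 1 / p < lam / q := by
      rw [lt_div_iff₀ hq0]
      calc 1 / p * q = q / p := by ring
        _ < lam := hlam
    have h2 : (0:ℝ) < n := by positivity
    have := mul_pos h2 (sub_pos.2 h1)
    linarith
  have hsum : ∑' k : ℕ, ENNReal.ofReal (ρ ^ k) ≠ ⊤ :=
    (summable_geometric_of_lt_one hρ0 hρ1).tsum_ofReal_ne_top
  obtain ⟨C', hC'0, hC'⟩ := aux_const (K * (M * ∑' k : ℕ, ENNReal.ofReal (ρ ^ k)))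
    (ENNReal.mul_ne_top hKt (ENNReal.mul_ne_top hMt hsum))
  refine ⟨C, C', hC0, hC'0, fun F hF => ⟨?_, ?_⟩⟩
  · exact (aux_first hp hq hlam0 hF).trans (by gcongr)
  refine le_trans ?_ (mul_le_mul_left hC' _)
  refine (aux_first hp hq hlam0 hF).trans ?_
  rw [mul_assoc, ← hK]
  gcongr
  rw [← ENNReal.tsum_mul_left, ← ENNReal.tsum_mul_right]
  apply ENNReal.tsum_le_tsum
  intro k
  calc _ ≤ ENNReal.ofReal ((2:ℝ) ^ (-(k : ℝ) * n * (lam - 1) / q)) *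
        (M * ENNReal.ofReal ((2:ℝ) ^ ((k:ℝ) * n * (1 / p - 1 / q))) * Np n p (SFn n q 1 F)) := by
        gcongr
        exact aux_S_ap hn hp hq hpq hF k
    _ = M * (ENNReal.ofReal ((2:ℝ) ^ (-(k : ℝ) * n * (lam - 1) / q)) *
        ENNReal.ofReal ((2:ℝ) ^ ((k:ℝ) * n * (1 / p - 1 / q)))) * Np n p (SFn n q 1 F) := by ring
    _ = _ := by
        rw [← ENNReal.ofReal_mul (by positivity), ← Real.rpow_add (by norm_num), hρ,
          ← Real.rpow_natCast, ← Real.rpow_mul (by norm_num)]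
        congr 4
        ring
end
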